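/- arXiv:1806.01382 — 2 statements merged into one kernel-verified Lean document; each statement's English description precedes it below -/
import Mathlib

section
/- Let d ≥ 3 be an integer and p a prime with gcd(p,d) = 1. For every 𝔟 > 0 and every K > 0 there exists C > 0 such that for all n ≥ 2 and all p-tuples (n_0,…,n_{p−1}) of nonnegative integers with Σ_j n_j = n, Σ_{j=0}^{p−1} j·n_j ≡ 0 (mod p), and Σ_{j=0}^{p−1} (n_j/n − 1/p)² ≤ 𝔟 ln n / n, the quantity P_n := #{ (a^{(1)},…,a^{(n)}) ∈ (T_{d,p})^n : Σ_i Φ(a^{(i)}) = (d n_0,…,d n_{p−1}) } / p^{(d−1)n} satisfies | P_n − M_n | ≤ C ( M_n · (ln n)^{3/2} / n^{1/2} + n^{−K} ), where M_n = p^{3/2} · ( p/(2π d n) )^{(p−1)/2} · exp( −(d p n/2) Σ_{j=0}^{p−1} (n_j/n − 1/p)² ). -/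
/-!
The tuples counted by `P_n` are `n × d` arrays over `ZMod p` all of whose rows sum to `0` and in which
the value `j` occurs `d n_j` times. The condition `∑ j n_j = 0` forces the total sum of every array
with these value counts to vanish, so the row condition should hold for a proportion `p / p ^ n` of
them, and the number of all such arrays is a multinomial coefficient.

For the equidistribution of row sums, put `L t = ∑ j, χ (t j) z j`. The polynomial
`(∑ t, L t ^ d) ^ n - ∑ t, L t ^ (d n)` in the variables `z j` is the generating function of
`p ^ n · #(zero row sums) - p · #(all)` as far as value counts with zero total sum are concerned
(`expand_diff`, `sum_gcoef`). Its coefficients are extracted by discrete Fourier inversion on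
`(ZMod N) ^ p` with `N = p (n d + 1)`, at points `z j = x j χ (u j)` whose moduli `x j = n_j / n` are
tilted to the target (`coeff_extract`, `count_diff_le`); `N` is a multiple of `p` so that the
characters of `ZMod p` act on the `u j` by translations.

By Parseval, `∑ t, ‖L t‖² = p ∑ x j² ≤ 1 + τ²` with `τ²` of order `log n / n`, while `‖L t‖ ≤ 1`. As
`d ≥ 3`, either one frequency dominates and the two terms of the generating function nearly cancel,
or both are exponentially small; this is the inequality `pow_sum_sub_sum_pow_le`, with relative error
`n τ³ + 1 / √n`. The remaining sum over `u` is bounded by a product of `p - 1` one-dimensional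
Gaussian sums, each saving a factor `1 / √n` (`sum_sum_exp_le`), which is exactly the order of
magnitude of the main term (`count_bound`).

The multinomial coefficient and the tilting weight are compared to the Gaussian through Stirling's
formula and a second-order expansion of the relative entropy (`allCount_asymp`, `weight_ge`). This
gives the theorem when `(log n) ^ (3 / 2) / √n` is small (`large_bound`); the finitely many other `n`
are absorbed by the term `n ^ (-K)`.
-/

/-- `phi a j` is the number of coordinates of the tuple `a` equal to `j`
(the `j`-th coordinate of the counting vector `Φ(a)`). -/
noncomputable def phi {p k : ℕ} (a : Fin k → ZMod p) (j : ZMod p) : ℕ :=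
  Nat.card {i : Fin k // a i = j}

/-- The adjacency matrix of the `d`-regular directed multigraph on `n` vertices
associated to a permutation `P` of the `n·d` points of the configuration model:
`A(P)_{kℓ} = #{k' ∈ F_k : P(k') ∈ F_ℓ}`. -/
noncomputable def adjMat (n d : ℕ) (P : Equiv.Perm (Fin n × Fin d)) :
    Matrix (Fin n) (Fin n) ℤ :=
  Matrix.of fun k l => (Nat.card {k' : Fin d // (P (k, k')).1 = l} : ℤ)

/-- `T_{d,p}`, the set of `d`-tuples over `F_p` summing to zero. -/
def Tset (d p : ℕ) [NeZero p] : Finset (Fin d → ZMod p) :=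
  Finset.univ.filter (fun a => ∑ i, a i = 0)

/-- The Gaussian main term `M_n` of the local central limit theorem:
`M_n = p^{3/2} (p/(2πdn))^{(p-1)/2} exp(-(dpn/2) Σ_j (n_j/n - 1/p)²)`. -/
noncomputable def Mgauss (d p n : ℕ) (ν : Fin p → ℕ) : ℝ :=
  (p : ℝ) ^ ((3 : ℝ) / 2) * ((p : ℝ) / (2 * Real.pi * d * n)) ^ (((p : ℝ) - 1) / 2) *
    Real.exp (-((d : ℝ) * p * n / 2) * ∑ j, ((ν j : ℝ) / n - 1 / p) ^ 2)

open scoped ComplexConjugate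

/-! ### Powers of a sum with a dominant term -/

lemma cube_le_exp (s : ℝ) : s ^ 3 ≤ 68 * Real.exp (s ^ 2 / 8) := by
  have h := Real.quadratic_le_exp_of_nonneg (x := s ^ 2 / 8) (by positivity)
  nlinarith [sq_nonneg (s ^ 2 - s), sq_nonneg s, sq_nonneg (s ^ 2)]

lemma norm_pow_sub_pow_le' {x y : ℂ} {S : ℝ} (hx : ‖x‖ ≤ S) (hy : ‖y‖ ≤ S) (k : ℕ) :
    ‖x ^ (k + 1) - y ^ (k + 1)‖ ≤ (k + 1) * ‖x - y‖ * S ^ k := by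
  have hS : 0 ≤ S := (norm_nonneg x).trans hx
  induction k with
  | zero => simp
  | succ k ih =>
    have e : x ^ (k + 1 + 1) - y ^ (k + 1 + 1)
        = x * (x ^ (k + 1) - y ^ (k + 1)) + (x - y) * y ^ (k + 1) := by ring
    rw [e]
    calc _ ≤ ‖x‖ * ‖x ^ (k + 1) - y ^ (k + 1)‖ + ‖x - y‖ * ‖y‖ ^ (k + 1) := by
            refine (norm_add_le _ _).trans ?_
            simp [norm_pow]
      _ ≤ S * ((k + 1) * ‖x - y‖ * S ^ k) + ‖x - y‖ * S ^ (k + 1) := by gcongr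
      _ = _ := by push_cast; ring

set_option maxHeartbeats 1000000 in
/-- A power of a sum of `d`-th powers is close to the sum of the powers when the vector `L` has
`ℓ²`-norm barely above `1` and sup-norm at most `1`: either one entry dominates, or both sides are
exponentially small. -/
lemma pow_sum_sub_sum_pow_le {ι : Type*} [Fintype ι] [Nonempty ι] (L : ι → ℂ) {d n : ℕ}
    (hd : 3 ≤ d) (hn : 1 ≤ n) {τ : ℝ} (hτ : 0 ≤ τ) (hτ1 : τ ^ 2 ≤ 1 / 256)
    (hnτ : n * τ ^ 3 ≤ 1) (hL : ∀ t, ‖L t‖ ≤ 1) (hS : ∑ t, ‖L t‖ ^ 2 ≤ 1 + τ ^ 2) :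
    ‖(∑ t, L t ^ d) ^ n - ∑ t, L t ^ (d * n)‖ ≤
      544 * Real.exp 5 * (n * τ ^ 3 + 1 / √n) * ∑ t, Real.exp (-(n / 8) * (1 - ‖L t‖ ^ 2)) := by
  classical
  obtain ⟨t0, -, ht0⟩ := Finset.exists_max_image Finset.univ (fun t => ‖L t‖) Finset.univ_nonempty
  obtain ⟨k, rfl⟩ : ∃ k, n = k + 1 := ⟨n - 1, by omega⟩
  set E := Finset.univ.erase t0 with hE
  set M := ‖L t0‖ with hM
  have hM0 : 0 ≤ M := norm_nonneg _
  have hM1 : M ≤ 1 := hL t0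
  set r := ∑ t ∈ E, ‖L t‖ ^ 2 with hr
  set R := ∑ t ∈ E, ‖L t‖ ^ d with hR
  have hr0 : 0 ≤ r := Finset.sum_nonneg fun _ _ => by positivity
  have hR0 : 0 ≤ R := Finset.sum_nonneg fun _ _ => by positivity
  have hMr : M ^ 2 + r ≤ 1 + τ ^ 2 := by
    rw [← Finset.add_sum_erase _ _ (Finset.mem_univ t0)] at hS; exact hS
  set η := 1 - M ^ 2 with hη
  have hη0 : 0 ≤ η := by nlinarith
  set h := √η with hh
  have hh0 : 0 ≤ h := Real.sqrt_nonneg _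
  have hh2 : h ^ 2 = η := Real.sq_sqrt hη0
  have hpow3 : ∀ t, ‖L t‖ ^ d ≤ ‖L t‖ * ‖L t‖ ^ 2 := fun t => by
    rw [← pow_succ']
    exact pow_le_pow_of_le_one (norm_nonneg _) (hL t) hd
  have hRM : R ≤ M * r := by
    rw [hR, hr, Finset.mul_sum]
    exact Finset.sum_le_sum fun t _ => (hpow3 t).trans
      (mul_le_mul_of_nonneg_right (ht0 t (Finset.mem_univ _)) (by positivity))
  have hsr : √r ≤ τ + h := by
    apply Real.sqrt_le_iff.2 ⟨by positivity, ?_⟩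
    nlinarith [mul_nonneg hτ hh0]
  have hRr : R ≤ 4 * (τ ^ 3 + h ^ 3) := by
    have h1 : R ≤ √r * r := by
      rw [hR]; nth_rewrite 2 [hr]; rw [Finset.mul_sum]
      refine Finset.sum_le_sum fun t ht => (hpow3 t).trans
        (mul_le_mul_of_nonneg_right (Real.le_sqrt_of_sq_le ?_) (by positivity))
      exact Finset.single_le_sum (f := fun t => ‖L t‖ ^ 2) (fun _ _ => by positivity) ht
    have h2 : √r * r = √r ^ 3 := by
      nth_rewrite 2 [← Real.sq_sqrt hr0]; ring
    have h3 : √r ^ 3 ≤ (τ + h) ^ 3 := pow_le_pow_left₀ (Real.sqrt_nonneg _) hsr 3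
    have h4 : (τ + h) ^ 3 ≤ 4 * (τ ^ 3 + h ^ 3) := by
      nlinarith [mul_nonneg (add_nonneg hτ hh0) (sq_nonneg (τ - h))]
    linarith
  set S := M ^ d + R with hSdef
  have hS0 : 0 ≤ S := by positivity
  have hMd : M ^ d ≤ M * M ^ 2 := hpow3 t0
  have hSb : S ≤ 1 - η / 4 + 4 * τ ^ 3 := by
    by_cases hc : h ≤ 1 / 8
    · have : h ^ 3 ≤ η / 8 := by rw [← hh2]; nlinarith [sq_nonneg h]
      have : M * M ^ 2 ≤ 1 - η := by nlinarith [sq_nonneg M]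
      linarith
    · have h1 : S ≤ M * (1 + τ ^ 2) := by nlinarith
      have h2 : M ≤ 1 - η / 2 := by nlinarith [sq_nonneg (M - 1)]
      have h3 : 1 / 64 ≤ η := by rw [← hh2]; nlinarith
      have : 0 ≤ τ ^ 3 := by positivity
      nlinarith [sq_nonneg τ]
  have hSk : S ^ k ≤ Real.exp 5 * Real.exp (-((k + 1 : ℕ) : ℝ) * η / 4) := by
    have h1 : S ≤ Real.exp (- η / 4 + 4 * τ ^ 3) := by
      refine hSb.trans (le_trans ?_ (Real.add_one_le_exp _)); linarith
    calc S ^ k ≤ Real.exp (- η / 4 + 4 * τ ^ 3) ^ k := pow_le_pow_left₀ hS0 h1 k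
      _ = Real.exp (k * (- η / 4 + 4 * τ ^ 3)) := by rw [← Real.exp_nat_mul]
      _ ≤ Real.exp (5 + (-((k + 1 : ℕ) : ℝ) * η / 4)) := by
          apply Real.exp_le_exp.2
          push_cast at hnτ ⊢
          have : 0 ≤ τ ^ 3 := by positivity
          have : η ≤ 1 := by nlinarith [sq_nonneg M]
          nlinarith
      _ = _ := Real.exp_add _ _
  have hsumle : ∀ t ∈ E, ‖L t‖ ^ d ≤ S := fun t ht => by
    have : ‖L t‖ ^ d ≤ R :=
      Finset.single_le_sum (f := fun t => ‖L t‖ ^ d) (fun _ _ => by positivity) ht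
    have : 0 ≤ M ^ d := by positivity
    linarith
  have hv : ‖∑ t ∈ E, L t ^ d‖ ≤ R := by
    refine (norm_sum_le _ _).trans (le_of_eq ?_); simp [hR]
  have hdiff : ‖(∑ t, L t ^ d) ^ (k + 1) - ∑ t, L t ^ (d * (k + 1))‖
      ≤ 2 * (k + 1) * R * S ^ k := by
    rw [← Finset.add_sum_erase _ _ (Finset.mem_univ t0),
      ← Finset.add_sum_erase _ (fun t => L t ^ (d * (k + 1))) (Finset.mem_univ t0), ← sub_sub]
    have h1 : ‖(L t0 ^ d + ∑ t ∈ E, L t ^ d) ^ (k + 1) - L t0 ^ (d * (k + 1))‖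
        ≤ (k + 1) * R * S ^ k := by
      rw [pow_mul]
      have hx : ‖L t0 ^ d + ∑ t ∈ E, L t ^ d‖ ≤ S := by
        refine (norm_add_le _ _).trans ?_
        rw [norm_pow]; exact add_le_add_right hv _
      have hy : ‖L t0 ^ d‖ ≤ S := by rw [norm_pow]; linarith
      refine (norm_pow_sub_pow_le' hx hy k).trans ?_
      rw [add_sub_cancel_left]
      gcongr
    have h2 : ‖∑ t ∈ E, L t ^ (d * (k + 1))‖ ≤ R * S ^ k := by
      refine (norm_sum_le _ _).trans ?_
      rw [hR, Finset.sum_mul]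
      refine Finset.sum_le_sum fun t ht => ?_
      rw [norm_pow, pow_mul, pow_succ']
      gcongr
      exact hsumle t ht
    have h3 : R * S ^ k ≤ (k + 1) * R * S ^ k := by
      have : 0 ≤ R * S ^ k := by positivity
      have : 0 ≤ (k : ℝ) := by positivity
      nlinarith
    calc _ ≤ _ := norm_sub_le _ _
      _ ≤ (k + 1) * R * S ^ k + R * S ^ k := add_le_add h1 h2
      _ ≤ _ := by linarith
  set n : ℝ := ((k + 1 : ℕ) : ℝ) with hndef
  have hn1 : (k : ℝ) + 1 = n := by rw [hndef]; push_cast; ring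
  rw [hn1] at hdiff
  have hn0 : 0 < n := by rw [hndef]; positivity
  have hexp : Real.exp (-(n / 8) * η) ≤ ∑ t, Real.exp (-(n / 8) * (1 - ‖L t‖ ^ 2)) :=
    Finset.single_le_sum (f := fun t => Real.exp (-(n / 8) * (1 - ‖L t‖ ^ 2)))
      (fun _ _ => by positivity) (Finset.mem_univ t0)
  have hcube : n * h ^ 3 * Real.exp (-n * η / 4) ≤ 68 / √n * Real.exp (-(n / 8) * η) := by
    have hsn : 0 < √n := Real.sqrt_pos.2 hn0
    have hc := cube_le_exp (√n * h)
    rw [mul_pow, mul_pow, Real.sq_sqrt hn0.le, hh2] at hc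
    have e1 : Real.exp (-(n / 8) * η) = Real.exp (n * η / 8) * Real.exp (-n * η / 4) := by
      rw [← Real.exp_add]; congr 1; ring
    have e2 : n * h ^ 3 = √n ^ 3 * h ^ 3 / √n := by
      have : √n ^ 3 = n * √n := by rw [pow_succ, Real.sq_sqrt hn0.le]
      rw [this]; field_simp
    rw [e1, e2, ← mul_assoc, div_mul_eq_mul_div 68]
    gcongr
  have hexp2 : Real.exp (-n * η / 4) ≤ Real.exp (-(n / 8) * η) := by
    apply Real.exp_le_exp.2; nlinarith [mul_nonneg hn0.le hη0]
  calc _ ≤ 2 * n * R * S ^ k := hdiff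
    _ ≤ 2 * n * (4 * (τ ^ 3 + h ^ 3)) * (Real.exp 5 * Real.exp (-n * η / 4)) := by gcongr
    _ = 8 * Real.exp 5 * (n * τ ^ 3 * Real.exp (-n * η / 4)
          + n * h ^ 3 * Real.exp (-n * η / 4)) := by ring
    _ ≤ 8 * Real.exp 5 * (n * τ ^ 3 * Real.exp (-(n / 8) * η)
          + 68 / √n * Real.exp (-(n / 8) * η)) := by gcongr
    _ = 8 * Real.exp 5 * (n * τ ^ 3 + 68 / √n) * Real.exp (-(n / 8) * η) := by ring
    _ ≤ 544 * Real.exp 5 * (n * τ ^ 3 + 1 / √n) * Real.exp (-(n / 8) * η) := by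
        apply mul_le_mul_of_nonneg_right _ (Real.exp_pos _).le
        have : 0 ≤ Real.exp 5 * (n * τ ^ 3) := by positivity
        have e : 68 / √n = 68 * (1 / √n) := by ring
        rw [e]; linarith
    _ ≤ _ := by gcongr

/-! ### Fourier analysis on `ZMod p` and Gaussian sums -/

/-- The Fourier transform at frequency `t` of the function `z` on `ZMod p`. -/
noncomputable def ft {p : ℕ} [NeZero p] (z : ZMod p → ℂ) (t : ZMod p) : ℂ :=
  ∑ j, ZMod.stdAddChar (t * j) * z j

lemma sum_stdAddChar_mul {N : ℕ} [NeZero N] (b : ZMod N) :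
    ∑ x : ZMod N, (ZMod.stdAddChar (x * b) : ℂ) = if b = 0 then (N : ℂ) else 0 := by
  have := AddChar.sum_mulShift b (ZMod.isPrimitive_stdAddChar N)
  rw [this]; simp

lemma norm_stdAddChar {N : ℕ} [NeZero N] (a : ZMod N) : ‖(ZMod.stdAddChar a : ℂ)‖ = 1 := by
  rw [ZMod.stdAddChar_apply]; exact Circle.norm_coe _

lemma conj_stdAddChar {N : ℕ} [NeZero N] (a : ZMod N) :
    conj (ZMod.stdAddChar a : ℂ) = ZMod.stdAddChar (-a) :=
  (AddChar.map_neg_eq_conj _ _).symm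

/-- Parseval's identity on `ZMod p`. -/
lemma sum_norm_ft_sq {p : ℕ} [NeZero p] (z : ZMod p → ℂ) :
    ∑ t, ‖ft z t‖ ^ 2 = p * ∑ j, ‖z j‖ ^ 2 := by
  have h : ((∑ t, ‖ft z t‖ ^ 2 : ℝ) : ℂ) = ((p * ∑ j, ‖z j‖ ^ 2 : ℝ) : ℂ) := by
    push_cast
    simp_rw [← Complex.mul_conj', ft, map_sum, map_mul, conj_stdAddChar, Finset.sum_mul_sum]
    rw [Finset.sum_comm, Finset.mul_sum]
    refine Finset.sum_congr rfl fun j _ => ?_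
    rw [Finset.sum_comm]
    have : ∀ k : ZMod p, ∑ t : ZMod p, (ZMod.stdAddChar (t * j) * z j : ℂ)
        * (ZMod.stdAddChar (-(t * k)) * conj (z k))
        = z j * conj (z k) * if j - k = 0 then (p : ℂ) else 0 := fun k => by
      rw [← sum_stdAddChar_mul, Finset.mul_sum]
      refine Finset.sum_congr rfl fun t _ => ?_
      rw [mul_sub, sub_eq_add_neg, AddChar.map_add_eq_mul]; ring
    simp_rw [this, sub_eq_zero]
    simp; ring
  exact_mod_cast h

lemma norm_ft_le_one {p : ℕ} [NeZero p] {z : ZMod p → ℂ} (h : ∑ j, ‖z j‖ = 1) (t : ZMod p) :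
    ‖ft z t‖ ≤ 1 := by
  rw [← h]
  refine (norm_sum_le _ _).trans (le_of_eq ?_)
  simp

/-- Deficit of a convex combination of unit vectors from being a unit vector, bounded below by the
deficits of the pairwise scalar products with one fixed vector `w j0`. -/
lemma one_sub_norm_sq_ge {ι : Type*} [Fintype ι] (x : ι → ℝ) (w : ι → ℂ)
    (hw : ∀ j, ‖w j‖ = 1) {x0 : ℝ} (hx0 : 0 ≤ x0) (hx : ∀ j, x0 ≤ x j) (hsum : ∑ j, x j = 1)
    (j0 : ι) :
    x0 ^ 2 * ∑ j, (1 - (w j * conj (w j0)).re) ≤ 1 - ‖∑ j, (x j : ℂ) * w j‖ ^ 2 := by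
  have h1 : ‖∑ j, (x j : ℂ) * w j‖ ^ 2 = ∑ j, ∑ k, x j * x k * (w j * conj (w k)).re := by
    have : ((‖∑ j, (x j : ℂ) * w j‖ ^ 2 : ℝ) : ℂ)
        = ∑ j, ∑ k, (x j : ℂ) * x k * (w j * conj (w k)) := by
      push_cast
      rw [← Complex.mul_conj', map_sum, Finset.sum_mul_sum]
      refine Finset.sum_congr rfl fun j _ => Finset.sum_congr rfl fun k _ => ?_
      simp only [map_mul, Complex.conj_ofReal]; ring
    have h2 := congrArg Complex.re this
    rw [Complex.ofReal_re] at h2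
    rw [h2]
    simp only [Complex.re_sum, ← Complex.ofReal_mul, Complex.re_ofReal_mul]
  have h2 : (1 : ℝ) = ∑ j, ∑ k, x j * x k := by
    rw [← Finset.sum_mul_sum, hsum]; norm_num
  have hre : ∀ j k, (w j * conj (w k)).re ≤ 1 := fun j k => by
    refine (Complex.re_le_norm _).trans ?_
    rw [norm_mul, Complex.norm_conj, hw, hw]; norm_num
  rw [h1]
  nth_rewrite 2 [h2]
  rw [← Finset.sum_sub_distrib, Finset.mul_sum]
  refine Finset.sum_le_sum fun j _ => ?_
  rw [← Finset.sum_sub_distrib]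
  have h3 : x j * x j0 - x j * x j0 * (w j * conj (w j0)).re
      ≤ ∑ k, (x j * x k - x j * x k * (w j * conj (w k)).re) :=
    Finset.single_le_sum (f := fun k => x j * x k - x j * x k * (w j * conj (w k)).re)
      (fun k _ => by
        have := mul_nonneg (mul_nonneg (hx0.trans (hx j)) (hx0.trans (hx k)))
          (sub_nonneg.2 (hre j k))
        linarith) (Finset.mem_univ j0)
  refine le_trans ?_ h3
  have h4 : x0 ^ 2 ≤ x j * x j0 := by
    rw [sq]; exact mul_le_mul (hx j) (hx j0) hx0 (hx0.trans (hx j))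
  nlinarith [hre j j0]

/-- The character of `ZMod p` factors through that of `ZMod (p * m)`. -/
lemma stdAddChar_eq_lift {p m : ℕ} [NeZero p] [NeZero (p * m)] (a : ZMod p) :
    (ZMod.stdAddChar a : ℂ) = ZMod.stdAddChar (N := p * m) ((m * a.val : ℕ) : ZMod (p * m)) := by
  have hm : (m : ℂ) ≠ 0 := by
    have := NeZero.ne (p * m)
    exact_mod_cast (mul_ne_zero_iff.1 this).2
  have hp : (p : ℂ) ≠ 0 := by exact_mod_cast NeZero.ne p
  have h1 : a = ((a.val : ℤ) : ZMod p) := by simp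
  conv_lhs => rw [h1]
  rw [ZMod.stdAddChar_coe, ← Int.cast_natCast (m * a.val), ZMod.stdAddChar_coe]
  congr 1
  push_cast
  field_simp

/-- `1 - cos (2π w / N)` for `w : ZMod N`. -/
noncomputable def cosDef {N : ℕ} [NeZero N] (w : ZMod N) : ℝ := 1 - (ZMod.stdAddChar w : ℂ).re

/-- Quadratic lower bound for `cosDef` in terms of a centred representative. -/
lemma cosDef_ge {N : ℕ} [NeZero N] (w : ZMod N) {k : ℤ} (hk : (k : ZMod N) = w)
    (hkN : |2 * k| ≤ N) : 8 * (k : ℝ) ^ 2 / N ^ 2 ≤ cosDef w := by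
  have hN : (0 : ℝ) < N := by exact_mod_cast NeZero.pos N
  have h1 : (ZMod.stdAddChar w : ℂ).re = Real.cos (2 * Real.pi * k / N) := by
    rw [← hk, ZMod.stdAddChar_coe]
    have : (2 * Real.pi * Complex.I * k / N : ℂ)
        = ((2 * Real.pi * k / N : ℝ) : ℂ) * Complex.I := by push_cast; ring
    rw [this, Complex.exp_ofReal_mul_I_re]
  have hkN' : 2 * |(k : ℝ)| ≤ N := by
    have : |2 * (k : ℝ)| ≤ N := by exact_mod_cast hkN
    rwa [abs_mul, abs_two] at this
  have h2 : |2 * Real.pi * k / N| ≤ Real.pi := by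
    rw [abs_div, abs_mul, abs_of_pos (by positivity : 0 < 2 * Real.pi), abs_of_pos hN,
      div_le_iff₀ hN]
    nlinarith [Real.pi_pos]
  have h3 := Real.cos_le_one_sub_mul_cos_sq h2
  rw [cosDef, h1]
  have : 2 / Real.pi ^ 2 * (2 * Real.pi * k / N) ^ 2 = 8 * (k : ℝ) ^ 2 / N ^ 2 := by
    field_simp; ring
  linarith

/-- The tangent line of `k ↦ k²` at `k = √n` reduces the Gaussian sum to a geometric series. -/
lemma sum_exp_neg_sq_le {a n : ℝ} (ha : 0 < a) (hn : 1 ≤ n) (N : ℕ) :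
    ∑ k ∈ Finset.range N, Real.exp (-a * (k : ℝ) ^ 2 / n)
      ≤ Real.exp a * (1 + 1 / (2 * a)) * √n := by
  have hn0 : 0 < n := by linarith
  have hs : 0 < √n := Real.sqrt_pos.2 hn0
  have hs1 : 1 ≤ √n := Real.one_le_sqrt.2 hn
  set y := 2 * a / √n with hy
  have hy0 : 0 < y := by positivity
  have h1 : ∀ k : ℕ, Real.exp (-a * (k : ℝ) ^ 2 / n) ≤ Real.exp a * Real.exp (-y) ^ k := by
    intro k
    rw [← Real.exp_nat_mul, ← Real.exp_add]
    apply Real.exp_le_exp.2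
    have : a * (k : ℝ) ^ 2 / n = a * (k / √n) ^ 2 := by
      rw [div_pow, Real.sq_sqrt hn0.le]; ring
    have h2 : (k : ℝ) * -y = - (2 * a * (k / √n)) := by rw [hy]; ring
    have h3 : -a * (k : ℝ) ^ 2 / n = - (a * (k / √n) ^ 2) := by rw [← this]; ring
    rw [h2, h3]
    nlinarith [sq_nonneg ((k : ℝ) / √n - 1)]
  have hlt : Real.exp (-y) < 1 := by rw [Real.exp_lt_one_iff]; linarith
  have h2 : (1 - Real.exp (-y))⁻¹ ≤ 1 + 1 / y := by
    have h3 : Real.exp (-y) ≤ 1 / (1 + y) := by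
      rw [Real.exp_neg, ← one_div]
      exact one_div_le_one_div_of_le (by positivity) (by linarith [Real.add_one_le_exp y])
    have h4 : y / (1 + y) ≤ 1 - Real.exp (-y) := by
      have : y / (1 + y) = 1 - 1 / (1 + y) := by field_simp; ring
      linarith
    calc _ ≤ (y / (1 + y))⁻¹ := inv_anti₀ (by positivity) h4
      _ = _ := by field_simp; ring
  calc _ ≤ ∑ k ∈ Finset.range N, Real.exp a * Real.exp (-y) ^ k :=
        Finset.sum_le_sum fun k _ => h1 k
    _ = Real.exp a * ∑ k ∈ Finset.range N, Real.exp (-y) ^ k := by rw [Finset.mul_sum]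
    _ ≤ Real.exp a * (1 - Real.exp (-y))⁻¹ := by
        gcongr
        rw [← tsum_geometric_of_lt_one (Real.exp_pos _).le hlt]
        exact (summable_geometric_of_lt_one (Real.exp_pos _).le hlt).sum_le_tsum _
          (fun _ _ => by positivity)
    _ ≤ Real.exp a * (1 + 1 / y) := by gcongr
    _ ≤ Real.exp a * ((1 + 1 / (2 * a)) * √n) := by
        gcongr
        have : 1 / y = 1 / (2 * a) * √n := by rw [hy]; field_simp
        rw [this]; linarith
    _ = _ := by ring

lemma sum_zmod_eq_range {N : ℕ} [NeZero N] (f : ℕ → ℝ) :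
    ∑ w : ZMod N, f w.val = ∑ k ∈ Finset.range N, f k := by
  refine Finset.sum_bij' (fun w _ => w.val) (fun k _ => (k : ZMod N)) ?_ ?_ ?_ ?_ ?_
  · intro w _; simpa using ZMod.val_lt w
  · simp
  · simp
  · intro k hk; exact ZMod.val_cast_of_lt (by simpa using hk)
  · simp

/-- A one-dimensional Gaussian sum over `ZMod N` has size at most a constant times `√n`: the sum is
compared with `∑ exp (-a k² / n)` over the representatives of both signs. -/
lemma sum_exp_cosDef_le {N : ℕ} [NeZero N] {κ n B : ℝ} (hκ : 0 < κ) (hn : 1 ≤ n) (hB : 0 < B)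
    (hN : (N : ℝ) ≤ B * n) :
    ∑ w : ZMod N, Real.exp (-(κ * n) * cosDef w)
      ≤ 2 * (Real.exp (8 * κ / B ^ 2) * (1 + 1 / (2 * (8 * κ / B ^ 2))) * √n) := by
  have hN0 : (0 : ℝ) < N := by exact_mod_cast NeZero.pos N
  set a := 8 * κ / B ^ 2 with ha
  have ha0 : 0 < a := by positivity
  have key : ∀ (w : ZMod N) (k : ℤ), (k : ZMod N) = w → |2 * k| ≤ N →
      Real.exp (-(κ * n) * cosDef w) ≤ Real.exp (-a * (k : ℝ) ^ 2 / n) := by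
    intro w k hk hkN
    apply Real.exp_le_exp.2
    have h1 := cosDef_ge w hk hkN
    have h2 : 8 * (k : ℝ) ^ 2 / (B * n) ^ 2 ≤ 8 * (k : ℝ) ^ 2 / N ^ 2 := by gcongr
    have h3 : a * (k : ℝ) ^ 2 / n = κ * n * (8 * (k : ℝ) ^ 2 / (B * n) ^ 2) := by
      rw [ha]; field_simp
    have h4 : -a * (k : ℝ) ^ 2 / n = -(a * (k : ℝ) ^ 2 / n) := by ring
    rw [h4, h3]
    have : κ * n * (8 * (k : ℝ) ^ 2 / (B * n) ^ 2) ≤ κ * n * cosDef w := by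
      gcongr; exact h2.trans h1
    linarith
  have h1 : ∀ w : ZMod N, Real.exp (-(κ * n) * cosDef w)
      ≤ Real.exp (-a * (w.val : ℝ) ^ 2 / n) + Real.exp (-a * ((-w).val : ℝ) ^ 2 / n) := by
    intro w
    have hw := ZMod.val_lt w
    by_cases hc : 2 * w.val ≤ N
    · have := key w w.val (by simp) (by rw [abs_of_nonneg (by positivity)]; exact_mod_cast hc)
      have h0 := (Real.exp_pos (-a * ((-w).val : ℝ) ^ 2 / n)).le
      push_cast at this
      linarith
    · have hw0 : w ≠ 0 := by rintro rfl; simp at hc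
      have : NeZero w := ⟨hw0⟩
      have hv : (-w).val = N - w.val := ZMod.val_neg_of_ne_zero w
      have hle : 2 * (-w).val ≤ N := by omega
      have := key w (-((-w).val : ℤ)) (by push_cast; simp)
        (by rw [mul_neg, abs_neg, abs_of_nonneg (by positivity)]; exact_mod_cast hle)
      have h0 := (Real.exp_pos (-a * (w.val : ℝ) ^ 2 / n)).le
      push_cast at this
      rw [neg_sq] at this
      linarith
  refine (Finset.sum_le_sum fun w _ => h1 w).trans ?_
  rw [Finset.sum_add_distrib]
  have h2 : ∑ w : ZMod N, Real.exp (-a * ((-w).val : ℝ) ^ 2 / n)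
      = ∑ w : ZMod N, Real.exp (-a * (w.val : ℝ) ^ 2 / n) :=
    Equiv.sum_comp (Equiv.neg (ZMod N)) fun w => Real.exp (-a * (w.val : ℝ) ^ 2 / n)
  rw [h2, sum_zmod_eq_range (fun k => Real.exp (-a * (k : ℝ) ^ 2 / n)), ← two_mul]
  gcongr
  exact sum_exp_neg_sq_le ha0 hn N

/-! ### Generating functions of arrays with given value counts -/

/-- Fourier inversion on `(ZMod N)^ι`: extraction of the coefficient with exponents `m`
from a polynomial evaluated at the points `y j * χ (u j)`. -/
lemma coeff_extract {ι A : Type*} [Fintype ι] [DecidableEq ι] [Fintype A] {N : ℕ} [NeZero N]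
    (cnt : A → ι → ℕ) (m : ι → ℕ) (hcnt : ∀ a j, cnt a j < N) (hm : ∀ j, m j < N)
    (g : A → ℂ) (y : ι → ℂ) :
    ∑ u : ι → ZMod N, (∑ a, g a * ∏ j, (y j * ZMod.stdAddChar (u j)) ^ cnt a j)
        * ∏ j, (ZMod.stdAddChar (-(u j * (m j : ZMod N))) : ℂ)
      = (N : ℂ) ^ Fintype.card ι * (∏ j, y j ^ m j)
          * ∑ a ∈ Finset.univ.filter (fun a => ∀ j, cnt a j = m j), g a := by
  simp_rw [Finset.sum_mul]
  rw [Finset.sum_comm, Finset.sum_filter, Finset.mul_sum]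
  refine Finset.sum_congr rfl fun a _ => ?_
  have h1 : ∀ u : ι → ZMod N, g a * (∏ j, (y j * ZMod.stdAddChar (u j)) ^ cnt a j)
        * ∏ j, (ZMod.stdAddChar (-(u j * (m j : ZMod N))) : ℂ)
      = g a * (∏ j, y j ^ cnt a j)
        * ∏ j, (ZMod.stdAddChar (u j * ((cnt a j : ZMod N) - (m j : ZMod N))) : ℂ) := by
    intro u
    rw [mul_assoc, mul_assoc, ← Finset.prod_mul_distrib, ← Finset.prod_mul_distrib]
    congr 1
    refine Finset.prod_congr rfl fun j _ => ?_
    rw [mul_pow, mul_assoc, ← AddChar.map_nsmul_eq_pow, ← AddChar.map_add_eq_mul]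
    congr 2
    rw [nsmul_eq_mul]; ring
  simp_rw [h1]
  rw [← Finset.mul_sum, ← Fintype.piFinset_univ,
    ← Finset.prod_univ_sum (fun _ => Finset.univ)
      (fun j (v : ZMod N) => (ZMod.stdAddChar (v * ((cnt a j : ZMod N) - (m j : ZMod N))) : ℂ))]
  simp_rw [sum_stdAddChar_mul, sub_eq_zero]
  by_cases h : ∀ j, cnt a j = m j
  · simp [h]; ring
  · rw [if_neg h, mul_zero]
    push Not at h
    obtain ⟨j, hj⟩ := h
    refine mul_eq_zero_of_right _ (Finset.prod_eq_zero (Finset.mem_univ j) (if_neg ?_))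
    intro h2
    apply hj
    have := congrArg ZMod.val h2
    rwa [ZMod.val_cast_of_lt (hcnt a j), ZMod.val_cast_of_lt (hm j)] at this

lemma phi_eq_card {p k : ℕ} (a : Fin k → ZMod p) (j : ZMod p) :
    phi a j = (Finset.univ.filter (fun i => a i = j)).card := by
  rw [phi, Nat.card_eq_fintype_card, Fintype.card_subtype]

lemma prod_eq_prod_pow_phi {p k : ℕ} [NeZero p] (a : Fin k → ZMod p) (z : ZMod p → ℂ) :
    ∏ i, z (a i) = ∏ j, z j ^ phi a j := by
  rw [← Finset.prod_fiberwise Finset.univ a fun i => z (a i)]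
  refine Finset.prod_congr rfl fun j _ => ?_
  rw [phi_eq_card]
  exact Finset.prod_eq_pow_card (fun i hi => by simp at hi; rw [hi])

lemma sum_phi {p k : ℕ} [NeZero p] (a : Fin k → ZMod p) : ∑ j, phi a j = k := by
  simp_rw [phi_eq_card]
  have := Finset.card_eq_sum_card_fiberwise (f := a) (s := Finset.univ) (t := Finset.univ)
    (by simp)
  rw [← this]; simp

lemma sum_eq_sum_phi {p k : ℕ} [NeZero p] (a : Fin k → ZMod p) :
    ∑ i, a i = ∑ j : ZMod p, (phi a j : ZMod p) * j := by
  rw [← Finset.sum_fiberwise Finset.univ a a]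
  refine Finset.sum_congr rfl fun j _ => ?_
  rw [phi_eq_card, Finset.sum_congr rfl (g := fun _ => j) (fun i hi => by simpa using hi)]
  simp

/-- The number of occurrences of the residue `j` in the `n × d` array `a`. -/
noncomputable def cnt {p n d : ℕ} (a : Fin n → Fin d → ZMod p) (j : ZMod p) : ℕ :=
  ∑ i, phi (a i) j

lemma prod_prod_eq {p n d : ℕ} [NeZero p] (a : Fin n → Fin d → ZMod p) (z : ZMod p → ℂ) :
    ∏ i, ∏ k, z (a i k) = ∏ j, z j ^ cnt a j := by
  simp_rw [prod_eq_prod_pow_phi, cnt]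
  rw [Finset.prod_comm]
  simp_rw [Finset.prod_pow_eq_pow_sum]

lemma sum_cnt {p n d : ℕ} [NeZero p] (a : Fin n → Fin d → ZMod p) : ∑ j, cnt a j = n * d := by
  simp_rw [cnt]
  rw [Finset.sum_comm]
  simp [sum_phi]

lemma cnt_le {p n d : ℕ} [NeZero p] (a : Fin n → Fin d → ZMod p) (j : ZMod p) :
    cnt a j ≤ n * d := by
  rw [← sum_cnt a]; exact Finset.single_le_sum (fun _ _ => Nat.zero_le _) (Finset.mem_univ j)

lemma sum_sum_eq {p n d : ℕ} [NeZero p] (a : Fin n → Fin d → ZMod p) :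
    ∑ i, ∑ k, a i k = ∑ j : ZMod p, (cnt a j : ZMod p) * j := by
  have h : ∀ i, ∑ k, a i k = ∑ j : ZMod p, (phi (a i) j : ZMod p) * j := fun i =>
    sum_eq_sum_phi (a i)
  simp_rw [h, cnt]
  rw [Finset.sum_comm]
  push_cast
  simp_rw [Finset.sum_mul]

lemma stdAddChar_sum {p : ℕ} [NeZero p] {ι : Type*} (s : Finset ι) (f : ι → ZMod p) :
    (ZMod.stdAddChar (∑ i ∈ s, f i) : ℂ) = ∏ i ∈ s, ZMod.stdAddChar (f i) := by
  classical
  induction s using Finset.induction_on with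
  | empty => simp
  | insert a s ha ih =>
    rw [Finset.sum_insert ha, Finset.prod_insert ha, AddChar.map_add_eq_mul, ih]

lemma ft_pow {p d : ℕ} [NeZero p] (z : ZMod p → ℂ) (t : ZMod p) :
    ft z t ^ d = ∑ b : Fin d → ZMod p, ZMod.stdAddChar (t * ∑ k, b k) * ∏ k, z (b k) := by
  rw [ft, Fintype.sum_pow]
  refine Finset.sum_congr rfl fun b _ => ?_
  rw [Finset.prod_mul_distrib, ← stdAddChar_sum, ← Finset.mul_sum]

lemma sum_ft_pow {p d : ℕ} [NeZero p] (z : ZMod p → ℂ) :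
    ∑ t, ft z t ^ d
      = ∑ b : Fin d → ZMod p, (if ∑ k, b k = 0 then (p : ℂ) else 0) * ∏ k, z (b k) := by
  simp_rw [ft_pow]
  rw [Finset.sum_comm]
  refine Finset.sum_congr rfl fun b _ => ?_
  rw [← Finset.sum_mul, sum_stdAddChar_mul]

/-- The coefficient function of `(∑ t, L t ^ d) ^ n - ∑ t, L t ^ (d * n)`, where `L = ft z`. -/
noncomputable def gcoef {p n d : ℕ} [NeZero p] (a : Fin n → Fin d → ZMod p) : ℂ :=
  (∏ i, if ∑ k, a i k = 0 then (p : ℂ) else 0)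
    - ∑ t : ZMod p, ZMod.stdAddChar (t * ∑ i, ∑ k, a i k)

/-- The generating function of `gcoef`. The first term counts the arrays all of whose row sums vanish,
the second one those whose total sum vanishes. -/
lemma expand_diff {p n d : ℕ} [NeZero p] (z : ZMod p → ℂ) :
    (∑ t, ft z t ^ d) ^ n - ∑ t, ft z t ^ (d * n)
      = ∑ a : Fin n → Fin d → ZMod p, gcoef a * ∏ j, z j ^ cnt a j := by
  have h2 : ∀ t, ft z t ^ (d * n) = ∑ a : Fin n → Fin d → ZMod p,
      ZMod.stdAddChar (t * ∑ i, ∑ k, a i k) * ∏ j, z j ^ cnt a j := by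
    intro t
    rw [pow_mul, ft_pow, Fintype.sum_pow]
    refine Finset.sum_congr rfl fun a _ => ?_
    rw [Finset.prod_mul_distrib, ← stdAddChar_sum, prod_prod_eq, ← Finset.mul_sum]
  simp_rw [h2]
  rw [sum_ft_pow, Fintype.sum_pow, Finset.sum_comm, ← Finset.sum_sub_distrib]
  refine Finset.sum_congr rfl fun a _ => ?_
  rw [Finset.prod_mul_distrib, prod_prod_eq, gcoef, sub_mul, Finset.sum_mul]

/-- The number of arrays with zero row sums and value counts `m`. -/
noncomputable def goodCount (p n d : ℕ) (m : ZMod p → ℕ) : ℕ :=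
  Nat.card {a : Fin n → Fin d → ZMod p // (∀ i, ∑ k, a i k = 0) ∧ ∀ j, cnt a j = m j}

/-- The number of all arrays with value counts `m`. -/
noncomputable def allCount (p n d : ℕ) (m : ZMod p → ℕ) : ℕ :=
  Nat.card {a : Fin n → Fin d → ZMod p // ∀ j, cnt a j = m j}

/-- Summed over the arrays with given value counts, `gcoef` measures the deviation of `goodCount` from
its expected value `p / p ^ n * allCount`. -/
lemma sum_gcoef {p n d : ℕ} [NeZero p] (m : ZMod p → ℕ) (hm : ∑ j : ZMod p, (m j : ZMod p) * j = 0) :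
    ∑ a ∈ Finset.univ.filter (fun a : Fin n → Fin d → ZMod p => ∀ j, cnt a j = m j), gcoef a
      = (p : ℂ) ^ n * goodCount p n d m - p * allCount p n d m := by
  classical
  have h1 : ∀ a ∈ Finset.univ.filter (fun a : Fin n → Fin d → ZMod p => ∀ j, cnt a j = m j),
      gcoef a = (if ∀ i, ∑ k, a i k = 0 then (p : ℂ) ^ n else 0) - p := by
    intro a ha
    rw [Finset.mem_filter] at ha
    rw [gcoef, sum_sum_eq]
    simp_rw [ha.2, hm]
    congr 1
    · split_ifs with h
      · simp [h]
      · push Not at h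
        obtain ⟨i, hi⟩ := h
        exact Finset.prod_eq_zero (Finset.mem_univ i) (if_neg hi)
    · simp
  rw [Finset.sum_congr rfl h1, Finset.sum_sub_distrib, ← Finset.sum_filter, Finset.filter_filter]
  simp only [Finset.sum_const, nsmul_eq_mul]
  rw [goodCount, allCount, Nat.card_eq_fintype_card, Nat.card_eq_fintype_card,
    Fintype.card_subtype, Fintype.card_subtype]
  simp_rw [and_comm]
  ring

/-- The triangle inequality in the Fourier inversion formula, applied to the generating function
`(∑ t, L t ^ d) ^ n - ∑ t, L t ^ (d * n)` at points of modulus `x j`. -/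
lemma count_diff_le {p n d N : ℕ} [NeZero p] [NeZero N] (hN : n * d < N) (x : ZMod p → ℝ)
    (hx : ∀ j, 0 ≤ x j) (m : ZMod p → ℕ) (hm : ∀ j, m j ≤ n * d)
    (hm0 : ∑ j : ZMod p, (m j : ZMod p) * j = 0) :
    (N : ℝ) ^ p * (∏ j, x j ^ m j) * |(p : ℝ) ^ n * goodCount p n d m - p * allCount p n d m|
      ≤ ∑ u : ZMod p → ZMod N,
        ‖(∑ t, ft (fun j => (x j : ℂ) * ZMod.stdAddChar (u j)) t ^ d) ^ n
          - ∑ t, ft (fun j => (x j : ℂ) * ZMod.stdAddChar (u j)) t ^ (d * n)‖ := by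
  have h := coeff_extract (N := N) (fun (a : Fin n → Fin d → ZMod p) j => cnt a j) m
    (fun a j => (cnt_le a j).trans_lt hN) (fun j => (hm j).trans_lt hN) gcoef
    (fun j => (x j : ℂ))
  rw [sum_gcoef m hm0, ZMod.card] at h
  have h2 : (N : ℝ) ^ p * (∏ j, x j ^ m j)
      * |(p : ℝ) ^ n * goodCount p n d m - p * allCount p n d m|
      = ‖(N : ℂ) ^ p * (∏ j, (x j : ℂ) ^ m j)
        * ((p : ℂ) ^ n * goodCount p n d m - p * allCount p n d m)‖ := by
    rw [norm_mul, norm_mul, norm_prod]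
    have : ‖((p : ℂ) ^ n * goodCount p n d m - p * allCount p n d m)‖
        = |(p : ℝ) ^ n * goodCount p n d m - p * allCount p n d m| := by
      rw [← Real.norm_eq_abs, ← Complex.norm_real]; push_cast; rfl
    rw [this]
    simp [abs_of_nonneg (hx _)]
  rw [h2, ← h]
  refine (norm_sum_le _ _).trans (Finset.sum_le_sum fun u _ => ?_)
  rw [norm_mul, ← expand_diff, norm_prod]
  simp

/-- The total number of arrays with given value counts is a multinomial coefficient. -/
lemma allCount_mul_prod_factorial {p n d : ℕ} [NeZero p] (m : ZMod p → ℕ)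
    (hm : ∑ j, m j = n * d) :
    (allCount p n d m : ℝ) * ∏ j, ((m j).factorial : ℝ) = ((n * d).factorial : ℝ) := by
  classical
  have e1 : (∑ j : ZMod p, (MvPolynomial.X j : MvPolynomial (ZMod p) ℝ)) ^ (n * d)
      = ∑ a : Fin n → Fin d → ZMod p,
        MvPolynomial.monomial (Finsupp.equivFunOnFinite.symm (cnt a)) (1 : ℝ) := by
    rw [mul_comm, pow_mul, Fintype.sum_pow, Fintype.sum_pow]
    refine Finset.sum_congr rfl fun a _ => ?_
    rw [MvPolynomial.monomial_eq, Finsupp.prod_fintype _ _ (by simp)]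
    simp only [map_one, one_mul, Finsupp.equivFunOnFinite_symm_apply_apply, cnt]
    simp_rw [← Finset.prod_pow_eq_pow_sum]
    conv_rhs => rw [Finset.prod_comm]
    refine Finset.prod_congr rfl fun i _ => ?_
    rw [← Finset.prod_fiberwise Finset.univ (a i)
      fun k => (MvPolynomial.X (a i k) : MvPolynomial (ZMod p) ℝ)]
    refine Finset.prod_congr rfl fun j _ => ?_
    rw [phi_eq_card]
    exact Finset.prod_eq_pow_card (fun k hk => by rw [(Finset.mem_filter.1 hk).2])
  have e2 := congrArg (MvPolynomial.coeff (Finsupp.equivFunOnFinite.symm m)) e1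
  rw [Finset.sum_pow_eq_sum_piAntidiag] at e2
  simp only [MvPolynomial.coeff_sum, MvPolynomial.coeff_monomial] at e2
  have e3 : ∀ k : ZMod p → ℕ, MvPolynomial.coeff (Finsupp.equivFunOnFinite.symm m)
      ((Nat.multinomial Finset.univ k : MvPolynomial (ZMod p) ℝ)
        * ∏ j, MvPolynomial.X j ^ k j)
      = if k = m then (Nat.multinomial Finset.univ k : ℝ) else 0 := by
    intro k
    have : ∏ j, (MvPolynomial.X j : MvPolynomial (ZMod p) ℝ) ^ k j
        = MvPolynomial.monomial (Finsupp.equivFunOnFinite.symm k) 1 := by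
      rw [MvPolynomial.monomial_eq, Finsupp.prod_fintype _ _ (by simp)]
      simp
    rw [this, ← map_natCast (MvPolynomial.C : ℝ →+* _), MvPolynomial.coeff_C_mul,
      MvPolynomial.coeff_monomial]
    simp
  simp_rw [e3] at e2
  rw [Finset.sum_ite_eq' ] at e2
  rw [if_pos (by simp [hm])] at e2
  have e4 : (allCount p n d m : ℝ) = Nat.multinomial Finset.univ m := by
    rw [e2, allCount, Nat.card_eq_fintype_card, Fintype.card_subtype]
    simp [funext_iff]
  have e5 := Nat.multinomial_spec Finset.univ m
  rw [hm] at e5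
  rw [e4, ← e5]; push_cast; ring

/-! ### Equidistribution of the row sums -/

lemma sum_prod_sub_eq {ι : Type*} [Fintype ι] [DecidableEq ι] {N : ℕ} [NeZero N]
    (G : ZMod N → ℝ) (hG : G 0 = 1) (j0 : ι) :
    ∑ v : ι → ZMod N, ∏ j, G (v j - v j0) = N * (∑ w, G w) ^ (Fintype.card ι - 1) := by
  -- summing over the value `a` of `v j0` turns the product into one with independent factors
  set H : ZMod N → ι → ZMod N → ℝ :=
    fun a j w => if j = j0 then (if w = a then 1 else 0) else G (w - a) with hH
  have h1 : ∀ v : ι → ZMod N, ∏ j, G (v j - v j0) = ∑ a, ∏ j, H a j (v j) := by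
    intro v
    rw [Finset.sum_eq_single (v j0)]
    · refine Finset.prod_congr rfl fun j _ => ?_
      by_cases h : j = j0
      · subst h; simp [hH, hG]
      · simp [hH, h]
    · intro a _ ha
      refine Finset.prod_eq_zero (Finset.mem_univ j0) ?_
      simp [hH, ha.symm]
    · simp
  simp_rw [h1]
  rw [Finset.sum_comm]
  have h2 : ∀ a, ∑ v : ι → ZMod N, ∏ j, H a j (v j) = (∑ w, G w) ^ (Fintype.card ι - 1) := by
    intro a
    rw [← Fintype.piFinset_univ, ← Finset.prod_univ_sum (fun _ => Finset.univ) (H a),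
      ← Finset.mul_prod_erase _ _ (Finset.mem_univ j0)]
    have h3 : ∑ w, H a j0 w = 1 := by simp [hH]
    have h4 : ∀ j ∈ Finset.univ.erase j0, ∑ w, H a j w = ∑ w, G w := by
      intro j hj
      have hj' : j ≠ j0 := Finset.ne_of_mem_erase hj
      simp only [hH, hj', if_false]
      exact Equiv.sum_comp (Equiv.subRight a) G
    rw [h3, Finset.prod_congr rfl h4, one_mul, Finset.prod_const,
      Finset.card_erase_of_mem (Finset.mem_univ _), Finset.card_univ]
  simp_rw [h2]
  simp

/-- The deficit `1 - ‖L t‖²` is bounded below by a sum of one-dimensional deficits in the differences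
`u j - u 0`, so that the sum over `u` factors into one-dimensional Gaussian sums. -/
lemma sum_sum_exp_le {p q : ℕ} [NeZero p] [NeZero (p * q)] {x : ZMod p → ℝ} {x0 n : ℝ}
    (hx0 : 0 ≤ x0) (hx : ∀ j, x0 ≤ x j) (hsum : ∑ j, x j = 1) (hn : 0 ≤ n) :
    ∑ u : ZMod p → ZMod (p * q), ∑ t, Real.exp (-(n / 8) *
        (1 - ‖ft (fun j => (x j : ℂ) * ZMod.stdAddChar (u j)) t‖ ^ 2))
      ≤ p * (((p * q : ℕ) : ℝ)
        * (∑ w : ZMod (p * q), Real.exp (-(x0 ^ 2 / 8 * n) * cosDef w)) ^ (p - 1)) := by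
  rw [Finset.sum_comm]
  set G : ZMod (p * q) → ℝ := fun w => Real.exp (-(x0 ^ 2 / 8 * n) * cosDef w) with hG
  have hG0 : G 0 = 1 := by simp [hG, cosDef]
  have h : ∀ t : ZMod p, ∑ u : ZMod p → ZMod (p * q), Real.exp (-(n / 8) *
        (1 - ‖ft (fun j => (x j : ℂ) * ZMod.stdAddChar (u j)) t‖ ^ 2))
      ≤ ((p * q : ℕ) : ℝ) * (∑ w, G w) ^ (p - 1) := by
    intro t
    -- the frequency `t` only translates `u`
    set s : ZMod p → ZMod (p * q) := fun j => ((q * (t * j).val : ℕ) : ZMod (p * q)) with hs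
    have h1 : ∀ u : ZMod p → ZMod (p * q), Real.exp (-(n / 8) *
        (1 - ‖ft (fun j => (x j : ℂ) * ZMod.stdAddChar (u j)) t‖ ^ 2))
        ≤ ∏ j, G ((u + s) j - (u + s) 0) := by
      intro u
      have h2 : ft (fun j => (x j : ℂ) * ZMod.stdAddChar (u j)) t
          = ∑ j, (x j : ℂ) * ZMod.stdAddChar ((u + s) j) := by
        refine Finset.sum_congr rfl fun j _ => ?_
        rw [stdAddChar_eq_lift (m := q), Pi.add_apply, AddChar.map_add_eq_mul]
        ring
      have h3 := one_sub_norm_sq_ge x (fun j => (ZMod.stdAddChar ((u + s) j) : ℂ))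
        (fun j => norm_stdAddChar _) hx0 hx hsum 0
      rw [h2, hG, ← Real.exp_sum, ← Finset.mul_sum]
      apply Real.exp_le_exp.2
      have h4 : ∑ j, cosDef ((u + s) j - (u + s) 0)
          = ∑ j, (1 - ((ZMod.stdAddChar ((u + s) j) : ℂ)
            * conj (ZMod.stdAddChar ((u + s) 0) : ℂ)).re) := by
        refine Finset.sum_congr rfl fun j _ => ?_
        rw [conj_stdAddChar, ← AddChar.map_add_eq_mul, ← sub_eq_add_neg, cosDef]
      rw [h4]
      have := mul_le_mul_of_nonneg_left h3 (by positivity : 0 ≤ n / 8)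
      linarith
    refine (Finset.sum_le_sum fun u _ => h1 u).trans (le_of_eq ?_)
    have := Equiv.sum_comp (Equiv.addRight s)
      (fun v : ZMod p → ZMod (p * q) => ∏ j, G (v j - v 0))
    simp only [Equiv.coe_addRight] at this
    rw [this, sum_prod_sub_eq G hG0, ZMod.card]
  refine (Finset.sum_le_sum fun t _ => h t).trans (le_of_eq ?_)
  simp

/-- Weighted comparison of the number of arrays with zero row sums to `p / p ^ n` times the number
of all arrays with the same value counts. -/
lemma count_bound (d p : ℕ) (hd : 3 ≤ d) [NeZero p] : ∃ C : ℝ, 0 < C ∧ ∀ n : ℕ, 1 ≤ n →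
    ∀ τ : ℝ, 0 ≤ τ → τ ^ 2 ≤ 1 / 256 → n * τ ^ 3 ≤ 1 →
    ∀ (m : ZMod p → ℕ) (x : ZMod p → ℝ), (∀ j, m j ≤ n * d) →
    (∑ j : ZMod p, (m j : ZMod p) * j = 0) → (∀ j, 1 / (2 * (p : ℝ)) ≤ x j) → ∑ j, x j = 1 →
    p * ∑ j, x j ^ 2 ≤ 1 + τ ^ 2 →
    (∏ j, x j ^ m j) * |(p : ℝ) ^ n * goodCount p n d m - p * allCount p n d m|
      ≤ C * (n * τ ^ 3 + 1 / √n) * (1 / √n) ^ (p - 1) := by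
  have hp : (0 : ℝ) < p := by exact_mod_cast NeZero.pos p
  set x0 : ℝ := 1 / (2 * (p : ℝ)) with hx0
  set κ := x0 ^ 2 / 8 with hκ
  set B : ℝ := p * (d + 1) with hB
  have hκ0 : 0 < κ := by positivity
  have hB0 : 0 < B := by positivity
  set C2 : ℝ := 2 * (Real.exp (8 * κ / B ^ 2) * (1 + 1 / (2 * (8 * κ / B ^ 2)))) with hC2
  have hC20 : 0 < C2 := by positivity
  refine ⟨544 * Real.exp 5 * (p * C2 ^ (p - 1)), by positivity, ?_⟩
  intro n hn τ hτ hτ1 hnτ m x hm hm0 hx hsum hsq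
  have hn1 : (1 : ℝ) ≤ n := by exact_mod_cast hn
  have hsn : 0 < √(n : ℝ) := Real.sqrt_pos.2 (by linarith)
  have hxnn : ∀ j, 0 ≤ x j := fun j => le_trans (by positivity) (hx j)
  set N := p * (n * d + 1) with hN
  have hp1 : 1 ≤ p := NeZero.pos p
  have : NeZero N := ⟨by positivity⟩
  have hNlt : n * d < N := by rw [hN]; nlinarith
  have hnN : (n : ℝ) ≤ N := by
    have : n ≤ N := by nlinarith
    exact_mod_cast this
  have hNB : (N : ℝ) ≤ B * n := by
    rw [hN, hB]; push_cast
    rw [mul_assoc]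
    gcongr
    nlinarith
  have hN0 : (0 : ℝ) < N := by linarith
  have hnorm : ∀ (u : ZMod p → ZMod N) j, ‖(x j : ℂ) * ZMod.stdAddChar (u j)‖ = x j := by
    intro u j
    rw [norm_mul, norm_stdAddChar, mul_one, Complex.norm_real, Real.norm_of_nonneg (hxnn j)]
  have h1 := count_diff_le (N := N) hNlt x hxnn m hm hm0
  have h2 : ∀ u : ZMod p → ZMod N, _ := fun u =>
    pow_sum_sub_sum_pow_le (ft (fun j => (x j : ℂ) * ZMod.stdAddChar (u j))) hd hn hτ hτ1 hnτ
      (fun t => norm_ft_le_one (by simp_rw [hnorm]; exact hsum) t)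
      (by rw [sum_norm_ft_sq]; simp_rw [hnorm]; exact hsq)
  have h3 := h1.trans (Finset.sum_le_sum fun u _ => h2 u)
  rw [← Finset.mul_sum] at h3
  have h4 := sum_sum_exp_le (p := p) (q := n * d + 1) (n := n) (by positivity) hx hsum
    (by positivity)
  have h5 := sum_exp_cosDef_le (N := N) hκ0 hn1 hB0 hNB
  rw [← mul_assoc, ← hC2] at h5
  have h6 : (N : ℝ) ^ p * ((∏ j, x j ^ m j)
        * |(p : ℝ) ^ n * goodCount p n d m - p * allCount p n d m|)
      ≤ 544 * Real.exp 5 * (n * τ ^ 3 + 1 / √n) * (p * (N * (C2 * √n) ^ (p - 1))) := by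
    rw [← mul_assoc]
    refine h3.trans ?_
    gcongr
    refine h4.trans ?_
    gcongr
  have h7 : (N : ℝ) ^ p = N * N ^ (p - 1) := by
    rw [← pow_succ', Nat.sub_add_cancel hp1]
  have h8 : (C2 * √n) ^ (p - 1) ≤ C2 ^ (p - 1) * (1 / √n) ^ (p - 1) * (N : ℝ) ^ (p - 1) := by
    rw [← mul_pow, ← mul_pow]
    refine pow_le_pow_left₀ (by positivity) ?_ _
    have : C2 * √n = C2 * (1 / √n) * n := by
      have := Real.mul_self_sqrt (show (0 : ℝ) ≤ n by linarith)
      field_simp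
      rw [sq, this]
    rw [this]
    gcongr
  have hNp : (0 : ℝ) < N ^ p := by positivity
  refine le_of_mul_le_mul_left ?_ hNp
  refine h6.trans ?_
  calc 544 * Real.exp 5 * (n * τ ^ 3 + 1 / √n) * (p * (N * (C2 * √n) ^ (p - 1)))
      ≤ 544 * Real.exp 5 * (n * τ ^ 3 + 1 / √n) * (p * (N *
        (C2 ^ (p - 1) * (1 / √n) ^ (p - 1) * (N : ℝ) ^ (p - 1)))) := by gcongr
    _ = _ := by rw [h7]; ring

/-! ### Stirling's formula and the multinomial main term -/

lemma log_stirlingSeq_le (k : ℕ) :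
    Real.log (Stirling.stirlingSeq (k + 1)) ≤ Real.log Real.pi / 2 + 1 / (12 * ((k : ℝ) + 1)) := by
  set f : ℕ → ℝ := fun k => Real.log (Stirling.stirlingSeq (k + 1)) - 1 / (12 * ((k : ℝ) + 1))
    with hf
  have hmono : Monotone f := by
    refine monotone_nat_of_le_succ fun k => ?_
    have h := Stirling.log_stirlingSeq_sdiff_le (k + 1)
    have e : (1 : ℝ) / (12 * ((k : ℝ) + 1)) - 1 / (12 * ((k : ℝ) + 1 + 1))
        = 1 / (12 * ((k + 1 : ℕ) : ℝ) * (((k + 1 : ℕ) : ℝ) + 1)) := by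
      push_cast
      field_simp
      ring
    simp only [hf]
    push_cast at h e ⊢
    linarith
  have hlim : Filter.Tendsto f Filter.atTop (nhds (Real.log (√Real.pi) - 0)) := by
    refine Filter.Tendsto.sub ?_ ?_
    · refine Filter.Tendsto.log ?_ (by positivity)
      exact Stirling.tendsto_stirlingSeq_sqrt_pi.comp (Filter.tendsto_add_atTop_nat 1)
    · have := (tendsto_one_div_add_atTop_nhds_zero_nat (𝕜 := ℝ)).const_mul (1 / 12)
      rw [mul_zero] at this
      refine this.congr fun k => ?_
      field_simp
  have h := hmono.ge_of_tendsto hlim k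
  rw [sub_zero, Real.log_sqrt Real.pi_pos.le] at h
  simp only [hf] at h
  linarith

/-- Stirling's formula in logarithmic form with an `O(1/m)` remainder. -/
lemma log_factorial_eq {m : ℕ} (hm : 1 ≤ m) : ∃ ρ : ℝ, 0 ≤ ρ ∧ ρ ≤ 1 / (12 * (m : ℝ)) ∧
    Real.log (m.factorial : ℝ)
      = ρ + (Real.log (2 * Real.pi) + Real.log m) / 2 + m * Real.log m - m := by
  have hm0 : (0 : ℝ) < m := by exact_mod_cast hm
  refine ⟨Real.log (m.factorial : ℝ)
      - ((Real.log (2 * Real.pi) + Real.log m) / 2 + m * Real.log m - m), ?_, ?_, by ring⟩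
  · have := Stirling.le_log_factorial_stirling (n := m) (by omega)
    linarith
  · obtain ⟨k, rfl⟩ : ∃ k, m = k + 1 := ⟨m - 1, by omega⟩
    have h := log_stirlingSeq_le k
    rw [Stirling.log_stirlingSeq_formula, Real.log_mul (by norm_num) hm0.ne',
      Real.log_div hm0.ne' (Real.exp_pos 1).ne', Real.log_exp] at h
    rw [Real.log_mul (by norm_num) Real.pi_pos.ne']
    push_cast at h ⊢
    linarith

lemma abs_log_one_add_le {y : ℝ} (hy : |y| ≤ 1 / 2) : |Real.log (1 + y)| ≤ 2 * |y| := by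
  have h := Real.abs_log_sub_add_sum_range_le (x := -y) (by rw [abs_neg]; linarith) 0
  simp only [Finset.range_zero, Finset.sum_empty, zero_add, pow_one, abs_neg, sub_neg_eq_add] at h
  refine h.trans ?_
  rw [div_le_iff₀ (by linarith)]
  nlinarith [abs_nonneg y]

lemma entropy_term {y : ℝ} (hy : |y| ≤ 1 / 2) :
    |(1 + y) * Real.log (1 + y) - y - y ^ 2 / 2| ≤ 4 * |y| ^ 3 := by
  have h := Real.abs_log_sub_add_sum_range_le (x := -y) (by rw [abs_neg]; linarith) 2
  simp only [Finset.sum_range_succ, Finset.range_zero, Finset.sum_empty, abs_neg,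
    sub_neg_eq_add] at h
  norm_num at h
  set r := -y + y ^ 2 / 2 + Real.log (1 + y) with hr
  have h3 : 0 ≤ |y| ^ 3 := by positivity
  have hr3 : |r| ≤ 2 * |y| ^ 3 := by
    refine h.trans ?_
    rw [div_le_iff₀ (by linarith)]
    nlinarith
  have e : (1 + y) * Real.log (1 + y) - y - y ^ 2 / 2 = -(y ^ 3 / 2) + (1 + y) * r := by
    rw [hr]; ring
  have h1 : |1 + y| ≤ 3 / 2 := by
    rw [abs_le] at hy ⊢; constructor <;> linarith [hy.1, hy.2]
  rw [e]
  calc _ ≤ |-(y ^ 3 / 2)| + |(1 + y) * r| := abs_add_le _ _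
    _ = |y| ^ 3 / 2 + |1 + y| * |r| := by rw [abs_neg, abs_div, abs_pow, abs_two, abs_mul]
    _ ≤ |y| ^ 3 / 2 + 3 / 2 * (2 * |y| ^ 3) := by gcongr
    _ ≤ _ := by linarith

/-- Second-order expansion of the relative entropy of the distribution `(1 + y j) / p` with respect
to the uniform distribution. -/
lemma entropy_bound {ι : Type*} [Fintype ι] {p : ℕ} (hp : 1 ≤ p) (hcard : Fintype.card ι = p)
    (y : ι → ℝ) {η : ℝ} (hη : η ≤ 1 / 2) (hy : ∀ j, |y j| ≤ η) (hsum : ∑ j, y j = 0) :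
    |∑ j, (1 + y j) / p * Real.log (1 + y j) - (∑ j, y j ^ 2) / (2 * p)| ≤ 4 * η ^ 3 := by
  have hp0 : (0 : ℝ) < p := by exact_mod_cast hp
  have e : ∑ j, (1 + y j) / p * Real.log (1 + y j) - (∑ j, y j ^ 2) / (2 * p)
      = (∑ j, ((1 + y j) * Real.log (1 + y j) - y j - y j ^ 2 / 2)) / p := by
    have e1 : ∑ j, (1 + y j) / p * Real.log (1 + y j)
        = (∑ j, (1 + y j) * Real.log (1 + y j)) / p := by
      rw [Finset.sum_div]
      exact Finset.sum_congr rfl fun j _ => by ring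
    rw [Finset.sum_sub_distrib, Finset.sum_sub_distrib, hsum, ← Finset.sum_div, sub_zero, e1]
    field_simp
  rw [e, abs_div, abs_of_pos hp0, div_le_iff₀ hp0]
  refine (Finset.abs_sum_le_sum_abs _ _).trans ?_
  calc _ ≤ ∑ _j : ι, 4 * η ^ 3 := Finset.sum_le_sum fun j _ =>
        (entropy_term ((hy j).trans hη)).trans (by
          have := hy j
          gcongr)
    _ = _ := by simp [hcard]; ring

/-- The Gaussian main term as a function of the squared deviation `Q2` from equidistribution. -/
noncomputable def gaussTerm (d p n : ℕ) (Q2 : ℝ) : ℝ :=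
  (p : ℝ) ^ ((3 : ℝ) / 2) * ((p : ℝ) / (2 * Real.pi * d * n)) ^ (((p : ℝ) - 1) / 2) *
    Real.exp (-((d : ℝ) * p * n / 2) * Q2)

lemma log_gaussTerm {d p n : ℕ} (hd : 1 ≤ d) (hp : 1 ≤ p) (hn : 1 ≤ n) (Q2 : ℝ) :
    Real.log (gaussTerm d p n Q2) = 3 / 2 * Real.log p
      + ((p : ℝ) - 1) / 2 * (Real.log p - (Real.log (2 * Real.pi) + Real.log d + Real.log n))
      - (d : ℝ) * p * n / 2 * Q2 := by
  have hd0 : (0 : ℝ) < d := by exact_mod_cast hd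
  have hp0 : (0 : ℝ) < p := by exact_mod_cast hp
  have hn0 : (0 : ℝ) < n := by exact_mod_cast hn
  rw [gaussTerm, Real.log_mul (by positivity) (by positivity),
    Real.log_mul (by positivity) (by positivity), Real.log_exp, Real.log_rpow hp0,
    Real.log_rpow (by positivity), Real.log_div hp0.ne' (by positivity),
    Real.log_mul (by positivity) hn0.ne', Real.log_mul (by positivity) hd0.ne']
  ring

lemma gaussTerm_pos {d p n : ℕ} (hd : 1 ≤ d) (hp : 1 ≤ p) (hn : 1 ≤ n) (Q2 : ℝ) :
    0 < gaussTerm d p n Q2 := by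
  have hd0 : (0 : ℝ) < d := by exact_mod_cast hd
  have hp0 : (0 : ℝ) < p := by exact_mod_cast hp
  have hn0 : (0 : ℝ) < n := by exact_mod_cast hn
  rw [gaussTerm]; positivity

lemma sum_sq_dev {p n : ℕ} [NeZero p] (ν : ZMod p → ℕ) :
    ∑ j, ((p : ℝ) * ν j / n - 1) ^ 2 = (p : ℝ) ^ 2 * ∑ j, ((ν j : ℝ) / n - 1 / p) ^ 2 := by
  have hp0 : (0 : ℝ) < p := by exact_mod_cast NeZero.pos p
  rw [Finset.mul_sum]
  refine Finset.sum_congr rfl fun j _ => ?_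
  field_simp

lemma sum_dev {p n : ℕ} [NeZero p] (hn : 1 ≤ n) (ν : ZMod p → ℕ) (hν : ∑ j, ν j = n) :
    ∑ j, ((p : ℝ) * ν j / n - 1) = 0 := by
  have hn0 : (0 : ℝ) < n := by exact_mod_cast hn
  have : ∑ j, (ν j : ℝ) = n := by exact_mod_cast hν
  rw [Finset.sum_sub_distrib, ← Finset.sum_div, ← Finset.mul_sum, this]
  field_simp
  simp

/-- Lower bound for the tilting weight. -/
lemma weight_ge {d p n : ℕ} [NeZero p] (hn : 1 ≤ n) (ν : ZMod p → ℕ) (hν : ∑ j, ν j = n) {η : ℝ}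
    (hη : η ≤ 1 / 2) (hy : ∀ j, |(p : ℝ) * ν j / n - 1| ≤ η) :
    Real.exp ((d : ℝ) * p * n / 2 * ∑ j, ((ν j : ℝ) / n - 1 / p) ^ 2 - 4 * (d * n) * η ^ 3)
      ≤ (∏ j, ((ν j : ℝ) / n) ^ (d * ν j)) * (p : ℝ) ^ (d * n) := by
  have hp0 : (0 : ℝ) < p := by exact_mod_cast NeZero.pos p
  have hn0 : (0 : ℝ) < n := by exact_mod_cast hn
  have hE := entropy_bound (NeZero.pos p) (ZMod.card p) (fun j => (p : ℝ) * ν j / n - 1) hη hy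
    (sum_dev hn ν hν)
  rw [sum_sq_dev] at hE
  have hpos : ∀ j, 0 < (p : ℝ) * ν j / n := fun j => by
    have := (abs_le.1 (hy j)).1; linarith
  have h1 : (∏ j, ((ν j : ℝ) / n) ^ (d * ν j)) * (p : ℝ) ^ (d * n)
      = Real.exp (d * n * ∑ j, (1 + ((p : ℝ) * ν j / n - 1)) / p
        * Real.log (1 + ((p : ℝ) * ν j / n - 1))) := by
    have h2 : (p : ℝ) ^ (d * n) = ∏ j, (p : ℝ) ^ (d * ν j) := by
      rw [Finset.prod_pow_eq_pow_sum, ← Finset.mul_sum, hν]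
    rw [h2, ← Finset.prod_mul_distrib, Finset.mul_sum, Real.exp_sum]
    refine Finset.prod_congr rfl fun j _ => ?_
    rw [← mul_pow, add_sub_cancel]
    have h3 : (ν j : ℝ) / n * p = (p : ℝ) * ν j / n := by ring
    rw [h3]
    nth_rewrite 1 [← Real.exp_log (hpos j)]
    rw [← Real.exp_nat_mul]
    congr 1
    push_cast
    field_simp
  rw [h1]
  apply Real.exp_le_exp.2
  have h4 := (abs_le.1 hE).1
  have h5 : (0 : ℝ) ≤ d * n := by positivity
  have h6 := mul_le_mul_of_nonneg_left h4 h5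
  have h7 : (p : ℝ) ^ 2 * (∑ j, ((ν j : ℝ) / n - 1 / p) ^ 2) / (2 * p)
      = p / 2 * ∑ j, ((ν j : ℝ) / n - 1 / p) ^ 2 := by field_simp
  rw [h7] at h6
  linarith

set_option maxHeartbeats 1000000 in
/-- Local limit theorem for the multinomial distribution, by Stirling's formula. -/
lemma allCount_asymp {d p n : ℕ} [NeZero p] (hd : 1 ≤ d) (hn : 1 ≤ n) (ν : ZMod p → ℕ)
    (hν : ∑ j, ν j = n) {η : ℝ} (hη : η ≤ 1 / 2) (hy : ∀ j, |(p : ℝ) * ν j / n - 1| ≤ η) :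
    ∃ E : ℝ, |E| ≤ (1 + 2 * (p : ℝ) ^ 2) / n + p * η + 4 * (d * n) * η ^ 3 ∧
      p * (allCount p n d fun j => d * ν j : ℝ) / (p : ℝ) ^ (d * n)
        = gaussTerm d p n (∑ j, ((ν j : ℝ) / n - 1 / p) ^ 2) * Real.exp E := by
  have hp1 : 1 ≤ p := NeZero.pos p
  have hp0 : (0 : ℝ) < p := by exact_mod_cast hp1
  have hn0 : (0 : ℝ) < n := by exact_mod_cast hn
  have hd0 : (0 : ℝ) < d := by exact_mod_cast hd
  have hd1 : (1 : ℝ) ≤ d := by exact_mod_cast hd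
  set y : ZMod p → ℝ := fun j => (p : ℝ) * ν j / n - 1 with hydef
  change ∀ j, |y j| ≤ η at hy
  set Q2 := ∑ j, ((ν j : ℝ) / n - 1 / p) ^ 2 with hQ2
  have hE := entropy_bound hp1 (ZMod.card p) y hη hy (sum_dev hn ν hν)
  have hsq : ∑ j, y j ^ 2 = (p : ℝ) ^ 2 * Q2 := sum_sq_dev ν
  have h7 : (p : ℝ) ^ 2 * Q2 / (2 * p) = p / 2 * Q2 := by field_simp
  rw [hsq, h7] at hE
  have hy2 : ∀ j, 1 / 2 ≤ 1 + y j := fun j => by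
    have := (abs_le.1 (hy j)).1; linarith
  have hyν : ∀ j, (ν j : ℝ) = n * ((1 + y j) / p) := fun j => by
    simp only [hydef]; field_simp; ring
  have hνpos : ∀ j, (0 : ℝ) < ν j := fun j => by
    rw [hyν]; have := hy2 j; positivity
  have hνpos' : ∀ j, 1 ≤ ν j := fun j => by exact_mod_cast hνpos j
  have hlogν : ∀ j, Real.log (ν j) = Real.log n + Real.log (1 + y j) - Real.log p := fun j => by
    have : (0 : ℝ) < 1 + y j := by linarith [hy2 j]
    rw [hyν, Real.log_mul hn0.ne' (by positivity), Real.log_div this.ne' hp0.ne']; ring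
  choose ρ hρ0 hρ1 hρ using fun j => log_factorial_eq (m := d * ν j)
    (Nat.mul_pos hd (hνpos' j))
  obtain ⟨ρ', hρ'0, hρ'1, hρ'⟩ := log_factorial_eq (m := n * d) (Nat.mul_pos hn hd)
  have hall := allCount_mul_prod_factorial (p := p) (n := n) (d := d) (fun j => d * ν j)
    (by rw [← Finset.mul_sum, hν, mul_comm])
  set a : ℝ := (allCount p n d fun j => d * ν j : ℝ) with ha
  have hfac : ∏ j, (((d * ν j).factorial : ℕ) : ℝ) ≠ 0 := by
    refine Finset.prod_ne_zero_iff.2 fun j _ => ?_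
    exact_mod_cast (Nat.factorial_pos _).ne'
  have ha0 : a ≠ 0 := by
    intro h
    rw [h, zero_mul] at hall
    exact (Nat.factorial_pos (n * d)).ne' (by exact_mod_cast hall.symm)
  have hapos : 0 < a := lt_of_le_of_ne (by rw [ha]; positivity) ha0.symm
  have hlog := congrArg Real.log hall
  rw [Real.log_mul ha0 hfac, Real.log_prod (fun j _ => by
    exact_mod_cast (Nat.factorial_pos _).ne')] at hlog
  simp_rw [hρ] at hlog
  rw [hρ'] at hlog
  push_cast at hlog
  have hl1 : Real.log ((n : ℝ) * d) = Real.log n + Real.log d := Real.log_mul hn0.ne' hd0.ne'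
  have hl2 : ∀ j, Real.log ((d : ℝ) * ν j)
      = Real.log d + Real.log n + Real.log (1 + y j) - Real.log p := fun j => by
    rw [Real.log_mul hd0.ne' (hνpos j).ne', hlogν]; ring
  set Λ := ∑ j, Real.log (1 + y j) with hΛ
  set D := ∑ j, (1 + y j) / p * Real.log (1 + y j) with hD
  have hsumfac : ∑ j, (ρ j + (Real.log (2 * Real.pi) + Real.log ((d : ℝ) * ν j)) / 2
        + d * ν j * Real.log ((d : ℝ) * ν j) - d * ν j)
      = ∑ j, ρ j + p * (Real.log (2 * Real.pi) + Real.log d + Real.log n - Real.log p) / 2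
        + Λ / 2 + d * n * (Real.log d + Real.log n - Real.log p) + d * n * D - d * n := by
    have hνr : ∑ j, (ν j : ℝ) = n := by exact_mod_cast hν
    have e : ∀ j, ρ j + (Real.log (2 * Real.pi) + Real.log ((d : ℝ) * ν j)) / 2
        + d * ν j * Real.log ((d : ℝ) * ν j) - d * ν j
        = ρ j + (Real.log (2 * Real.pi) + Real.log d + Real.log n - Real.log p) / 2
          + Real.log (1 + y j) / 2 + d * (Real.log d + Real.log n - Real.log p) * ν j
          + d * n * ((1 + y j) / p * Real.log (1 + y j)) - d * ν j := fun j => by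
      rw [hl2]
      have := hyν j
      have h8 : (d : ℝ) * ν j * Real.log (1 + y j)
          = d * n * ((1 + y j) / p * Real.log (1 + y j)) := by rw [this]; ring
      linear_combination h8
    simp_rw [e]
    simp only [Finset.sum_sub_distrib, Finset.sum_add_distrib, ← Finset.mul_sum, ← Finset.sum_div,
      hνr]
    simp
    ring
  rw [hsumfac, hl1] at hlog
  refine ⟨ρ' - ∑ j, ρ j - Λ / 2 - d * n * (D - p / 2 * Q2), ?_, ?_⟩
  · have b1 : |ρ'| ≤ 1 / n := by
      rw [abs_of_nonneg hρ'0]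
      refine hρ'1.trans ?_
      apply one_div_le_one_div_of_le hn0
      push_cast
      have h12 := mul_le_mul_of_nonneg_left hd1 hn0.le
      linarith only [h12, hn0]
    have b2 : |∑ j, ρ j| ≤ 2 * (p : ℝ) ^ 2 / n := by
      rw [abs_of_nonneg (Finset.sum_nonneg fun j _ => hρ0 j)]
      calc _ ≤ ∑ _j : ZMod p, 2 * (p : ℝ) / n := Finset.sum_le_sum fun j _ => by
            refine (hρ1 j).trans ?_
            rw [div_le_div_iff₀ (by have := hνpos j; push_cast; positivity) hn0]
            push_cast
            have h9 : (n : ℝ) ≤ 2 * p * ν j := by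
              rw [hyν j]
              have := hy2 j
              have h10 : 2 * (p : ℝ) * (n * ((1 + y j) / p)) = 2 * n * (1 + y j) := by
                field_simp
              rw [h10]
              have h14 := mul_le_mul_of_nonneg_left this hn0.le
              linarith only [h14]
            have h11 : 2 * (p : ℝ) * ν j ≤ 2 * p * (12 * (d * ν j)) := by
              have : (ν j : ℝ) ≤ 12 * (d * ν j) := by
                have h12 := mul_le_mul_of_nonneg_right hd1 (hνpos j).le
                have h13 := hνpos j
                linarith only [h12, h13]
              gcongr
            linarith
        _ = _ := by simp; ring
    have b3 : |Λ / 2| ≤ p * η := by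
      rw [abs_div, abs_two, div_le_iff₀ (by norm_num)]
      refine (Finset.abs_sum_le_sum_abs _ _).trans ?_
      calc _ ≤ ∑ _j : ZMod p, 2 * η := Finset.sum_le_sum fun j _ =>
            (abs_log_one_add_le ((hy j).trans hη)).trans (by linarith [hy j])
        _ = _ := by simp; ring
    have b4 : |d * n * (D - p / 2 * Q2)| ≤ 4 * (d * n) * η ^ 3 := by
      rw [abs_mul, abs_of_pos (by positivity : (0 : ℝ) < d * n)]
      have := mul_le_mul_of_nonneg_left hE (by positivity : (0 : ℝ) ≤ d * n)
      linarith
    have b5 : (1 + 2 * (p : ℝ) ^ 2) / n = 1 / n + 2 * (p : ℝ) ^ 2 / n := by ring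
    rw [b5]
    have t1 := abs_sub (ρ' - ∑ j, ρ j - Λ / 2) (d * n * (D - p / 2 * Q2))
    have t2 := abs_sub (ρ' - ∑ j, ρ j) (Λ / 2)
    have t3 := abs_sub ρ' (∑ j, ρ j)
    linarith only [t1, t2, t3, b1, b2, b3, b4]
  · have hG := gaussTerm_pos hd hp1 hn Q2
    have hlogG := log_gaussTerm hd hp1 hn Q2
    refine Real.log_injOn_pos (Set.mem_Ioi.2 (by positivity)) (Set.mem_Ioi.2 (by positivity)) ?_
    rw [Real.log_div (by positivity) (by positivity), Real.log_mul hp0.ne' ha0,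
      Real.log_mul hG.ne' (Real.exp_pos _).ne', Real.log_exp, hlogG, Real.log_pow]
    push_cast
    linear_combination hlog

/-! ### The local limit theorem -/

lemma gaussTerm_eq {d p n : ℕ} (hp : 1 ≤ p) (Q2 : ℝ) :
    gaussTerm d p n Q2
      = (p : ℝ) ^ ((3 : ℝ) / 2) * ((p : ℝ) / (2 * Real.pi * d)) ^ (((p : ℝ) - 1) / 2) *
        ((1 / √(n : ℝ)) ^ (p - 1) * Real.exp (-((d : ℝ) * p * n / 2 * Q2))) := by
  have h1 : (p : ℝ) / (2 * Real.pi * d * n) = p / (2 * Real.pi * d) * (1 / n) := by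
    rw [div_mul_div_comm, mul_one]
  have h2 : ((1 : ℝ) / n) ^ (((p : ℝ) - 1) / 2) = (1 / √(n : ℝ)) ^ (p - 1) := by
    have h3 : (1 : ℝ) / √(n : ℝ) = (1 / n) ^ ((1 : ℝ) / 2) := by
      rw [← Real.sqrt_eq_rpow, Real.sqrt_div zero_le_one, Real.sqrt_one]
    rw [h3, ← Real.rpow_natCast, ← Real.rpow_mul (by positivity), Nat.cast_sub hp]
    congr 1
    push_cast
    ring
  rw [gaussTerm, h1, Real.mul_rpow (by positivity) (by positivity), h2, neg_mul]
  ring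

set_option maxHeartbeats 2000000 in
/-- The local limit theorem with an error of relative size `(log n) ^ (3 / 2) / √n`, valid as soon
as this quantity is small. -/
lemma large_bound (d p : ℕ) (hd : 3 ≤ d) [NeZero p] (b : ℝ) (hb : 0 < b) :
    ∃ C : ℝ, 0 < C ∧ ∃ S : ℝ, 0 < S ∧ ∀ n : ℕ, 2 ≤ n →
      S * (Real.log n ^ ((3 : ℝ) / 2) / √(n : ℝ)) ≤ 1 → ∀ ν : ZMod p → ℕ, ∑ j, ν j = n →
      ∑ j, (ν j : ZMod p) * j = 0 →
      ∑ j, ((ν j : ℝ) / n - 1 / p) ^ 2 ≤ b * Real.log n / n →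
      |(goodCount p n d fun j => d * ν j : ℝ) / (p : ℝ) ^ ((d - 1) * n)
          - gaussTerm d p n (∑ j, ((ν j : ℝ) / n - 1 / p) ^ 2)|
        ≤ C * (gaussTerm d p n (∑ j, ((ν j : ℝ) / n - 1 / p) ^ 2)
          * (Real.log n ^ ((3 : ℝ) / 2) / √(n : ℝ))) := by
  have hp1 : 1 ≤ p := NeZero.pos p
  have hp0 : (0 : ℝ) < p := by exact_mod_cast hp1
  have hd0 : (0 : ℝ) < d := by exact_mod_cast (by omega : 0 < d)
  obtain ⟨C0, hC0, hcount⟩ := count_bound d p hd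
  set B := √b with hB
  have hB0 : 0 < B := Real.sqrt_pos.2 hb
  have hB2 : B ^ 2 = b := Real.sq_sqrt hb.le
  set P := √(p : ℝ) with hP
  have hP0 : 0 < P := Real.sqrt_pos.2 hp0
  have hP2 : P ^ 2 = p := Real.sq_sqrt hp0.le
  set CE : ℝ := (1 + 2 * (p : ℝ) ^ 2) * 8 + p * (p * B * 2) + 4 * d * (p * B) ^ 3 with hCE
  set κ : ℝ := (p : ℝ) ^ ((3 : ℝ) / 2) * ((p : ℝ) / (2 * Real.pi * d)) ^ (((p : ℝ) - 1) / 2)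
    with hκ
  have hκ0 : 0 < κ := by positivity
  refine ⟨2 * CE + C0 * ((P * B) ^ 3 + 8) * Real.exp 1 / κ, by positivity,
    4 * (p * B) + 32 * (P * B) + (P * B) ^ 3 + CE, by positivity, ?_⟩
  intro n hn hsmall ν hν hmod hdev
  have hn1 : 1 ≤ n := by omega
  have hn0 : (0 : ℝ) < n := by exact_mod_cast hn1
  have hn2 : (2 : ℝ) ≤ n := by exact_mod_cast hn
  set Q2 := ∑ j, ((ν j : ℝ) / n - 1 / p) ^ 2 with hQ2
  set G := gaussTerm d p n Q2 with hG
  have hG0 : 0 < G := gaussTerm_pos (by omega) hp1 hn1 Q2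
  have hL : 1 / 2 ≤ Real.log n := by
    have := Real.log_le_log (by norm_num) hn2
    linarith [Real.log_two_gt_d9]
  set s := √(Real.log n) with hs
  have hs2 : s ^ 2 = Real.log n := Real.sq_sqrt (by linarith)
  have hs0 : 0 ≤ s := Real.sqrt_nonneg _
  have hs1 : 1 / 2 ≤ s := by
    by_contra! h
    nlinarith
  set r := √(n : ℝ) with hr
  have hr0 : 0 < r := Real.sqrt_pos.2 hn0
  have hr2 : r ^ 2 = n := Real.sq_sqrt hn0.le
  have hr1 : 1 ≤ r := by
    by_contra! h
    nlinarith
  have hlam : Real.log n ^ ((3 : ℝ) / 2) = s ^ 3 := by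
    rw [hs, Real.sqrt_eq_rpow, ← Real.rpow_natCast, ← Real.rpow_mul (by linarith)]
    norm_num
  rw [hlam] at hsmall ⊢
  set lam := s ^ 3 / r with hlamdef
  have hlam0 : 0 ≤ lam := by positivity
  have hsr : s / r ≤ 2 * lam := by
    rw [hlamdef, ← mul_div_assoc]
    gcongr
    nlinarith
  have h1r : 1 / r ≤ 8 * lam := by
    rw [hlamdef, ← mul_div_assoc]
    gcongr
    nlinarith
  have h1n : 1 / (n : ℝ) ≤ 8 * lam := by
    refine le_trans ?_ h1r
    apply one_div_le_one_div_of_le hr0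
    nlinarith
  have hpB : 0 < (p : ℝ) * B := by positivity
  have hPB : 0 < P * B := by positivity
  have hPB3 : 0 < (P * B) ^ 3 := by positivity
  have hpB3 : 0 < 4 * d * (p * B) ^ 3 := by positivity
  have hCE1 : 4 * d * (p * B) ^ 3 ≤ CE := by
    have : 0 ≤ (1 + 2 * (p : ℝ) ^ 2) * 8 + p * (p * B * 2) := by positivity
    linarith
  have hCE0 : 0 < CE := lt_of_lt_of_le hpB3 hCE1
  have m1 : (p * B) * lam * 4 ≤ 1 ∧ (P * B) * lam * 32 ≤ 1 ∧ (P * B) ^ 3 * lam ≤ 1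
      ∧ CE * lam ≤ 1 ∧ 4 * d * (p * B) ^ 3 * lam ≤ 1 := by
    have a1 := mul_nonneg hpB.le hlam0
    have a2 := mul_nonneg hPB.le hlam0
    have a3 := mul_nonneg hPB3.le hlam0
    have a4 := mul_nonneg hCE0.le hlam0
    have a5 := mul_le_mul_of_nonneg_right hCE1 hlam0
    have e : (4 * (p * B) + 32 * (P * B) + (P * B) ^ 3 + CE) * lam
      = 4 * (p * B * lam) + 32 * (P * B * lam) + (P * B) ^ 3 * lam + CE * lam := by ring
    rw [e] at hsmall
    refine ⟨?_, ?_, ?_, ?_, ?_⟩ <;> linarith only [a1, a2, a3, a4, a5, hsmall]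
  obtain ⟨m1, m2, m3, m4, m5⟩ := m1
  set η : ℝ := p * B * (s / r) with hη
  set τ : ℝ := P * B * (s / r) with hτ
  have hη0 : 0 ≤ η := by positivity
  have hτ0 : 0 ≤ τ := by positivity
  have hηl : η ≤ p * B * (2 * lam) := by rw [hη]; gcongr
  have hτl : τ ≤ P * B * (2 * lam) := by rw [hτ]; gcongr
  have hη2 : η ≤ 1 / 2 := by linarith
  have hτ2 : τ ^ 2 ≤ 1 / 256 := by nlinarith
  have hnsr : (n : ℝ) * (s / r) ^ 3 = lam := by
    rw [hlamdef, ← hr2]; field_simp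
  have hnη : (n : ℝ) * η ^ 3 = (p * B) ^ 3 * lam := by rw [hη, mul_pow, ← hnsr]; ring
  have hnτ : (n : ℝ) * τ ^ 3 = (P * B) ^ 3 * lam := by rw [hτ, mul_pow, ← hnsr]; ring
  have hsr2 : (s / r) ^ 2 = Real.log n / n := by rw [div_pow, hs2, hr2]
  have hpQ : (p : ℝ) ^ 2 * Q2 ≤ η ^ 2 := by
    rw [hη, mul_pow, mul_pow, hB2, hsr2, mul_assoc]
    gcongr
    rw [← mul_div_assoc]; exact hdev
  have hpQ' : (p : ℝ) * Q2 ≤ τ ^ 2 := by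
    rw [hτ, mul_pow, mul_pow, hB2, hP2, hsr2, mul_assoc]
    gcongr
    rw [← mul_div_assoc]; exact hdev
  have hy : ∀ j, |(p : ℝ) * ν j / n - 1| ≤ η := fun j => by
    refine abs_le_of_sq_le_sq (le_trans ?_ hpQ) hη0
    rw [← sum_sq_dev ν]
    exact Finset.single_le_sum (f := fun j => ((p : ℝ) * ν j / n - 1) ^ 2)
      (fun _ _ => sq_nonneg _) (Finset.mem_univ j)
  obtain ⟨E, hE, hall⟩ := allCount_asymp (d := d) (by omega) hn1 ν hν hη2 hy
  rw [← hQ2, ← hG] at hall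
  have hEl : |E| ≤ CE * lam := by
    refine hE.trans ?_
    have e1 : (1 + 2 * (p : ℝ) ^ 2) / n ≤ (1 + 2 * (p : ℝ) ^ 2) * (8 * lam) := by
      rw [div_eq_mul_one_div]; gcongr
    have e2 : p * η ≤ p * (p * B * (2 * lam)) := by gcongr
    have e3 : 4 * (d * n) * η ^ 3 = 4 * d * (p * B) ^ 3 * lam := by
      linear_combination 4 * (d : ℝ) * hnη
    rw [e3, hCE]
    linarith
  have hνr : ∑ j, (ν j : ℝ) = n := by exact_mod_cast hν
  have hcnt := hcount n hn1 τ hτ0 hτ2 (by rw [hnτ]; exact m3) (fun j => d * ν j)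
    (fun j => (ν j : ℝ) / n)
    (fun j => by
      rw [mul_comm n d]
      exact Nat.mul_le_mul_left d (hν ▸ Finset.single_le_sum (f := ν)
        (fun _ _ => Nat.zero_le _) (Finset.mem_univ j)))
    (by
      push_cast
      simp_rw [mul_assoc]
      rw [← Finset.mul_sum, hmod, mul_zero])
    (fun j => by
      have h := (abs_le.1 (hy j)).1
      rw [div_le_iff₀ (by positivity)]
      have e : (ν j : ℝ) / n * (2 * p) = 2 * (p * ν j / n) := by ring
      rw [e]; linarith)
    (by rw [← Finset.sum_div, hνr, div_self hn0.ne'])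
    (by
      have e : ∑ j, ((ν j : ℝ) / n) ^ 2 = Q2 + 1 / p := by
        have h3 : ∀ j, ((ν j : ℝ) / n) ^ 2
            = ((ν j : ℝ) / n - 1 / p) ^ 2 + 2 / p * ((ν j : ℝ) / n) - 1 / (p : ℝ) ^ 2 :=
          fun j => by ring
        simp_rw [h3]
        rw [Finset.sum_sub_distrib, Finset.sum_add_distrib, ← Finset.mul_sum, ← Finset.sum_div,
          hνr, div_self hn0.ne', ← hQ2]
        simp
        field_simp
        ring
      rw [e, mul_add, mul_one_div_cancel hp0.ne']
      linarith)
  have hw := weight_ge (d := d) hn1 ν hν hη2 hy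
  rw [← hQ2] at hw
  set W := ∏ j, ((ν j : ℝ) / n) ^ (d * ν j) with hW
  set good : ℝ := (goodCount p n d fun j => d * ν j : ℝ) with hgood
  set all : ℝ := (allCount p n d fun j => d * ν j : ℝ) with halldef
  set g : ℝ := (d : ℝ) * p * n / 2 * Q2 with hg
  have hpow : (p : ℝ) ^ (d * n) = (p : ℝ) ^ ((d - 1) * n) * (p : ℝ) ^ n := by
    rw [← pow_add]
    congr 1
    rw [← Nat.succ_mul]
    congr 1
    omega
  have hgd : good / (p : ℝ) ^ ((d - 1) * n) = (p : ℝ) ^ n * good / (p : ℝ) ^ (d * n) := by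
    rw [hpow]; field_simp
  set X : ℝ := |(p : ℝ) ^ n * good - p * all| with hX
  have hpd : (0 : ℝ) < (p : ℝ) ^ (d * n) := by positivity
  have hδ : Real.exp (g - 1) ≤ W * (p : ℝ) ^ (d * n) := by
    refine le_trans (Real.exp_le_exp.2 ?_) hw
    have e3 : 4 * (d * n) * η ^ 3 = 4 * d * (p * B) ^ 3 * lam := by
      linear_combination 4 * (d : ℝ) * hnη
    rw [e3]; linarith
  have hX1 : X / (p : ℝ) ^ (d * n)
      ≤ C0 * ((P * B) ^ 3 + 8) * Real.exp 1 / κ * (G * lam) := by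
    have hGe : G = κ * ((1 / r) ^ (p - 1) * Real.exp (-g)) := gaussTerm_eq hp1 Q2
    have h5 : X / (p : ℝ) ^ (d * n) * Real.exp (g - 1) ≤ W * X := by
      calc _ ≤ X / (p : ℝ) ^ (d * n) * (W * (p : ℝ) ^ (d * n)) := by gcongr
        _ = _ := by field_simp
    have h6 : n * τ ^ 3 + 1 / r ≤ ((P * B) ^ 3 + 8) * lam := by
      rw [hnτ]; linarith
    have h7 : X / (p : ℝ) ^ (d * n) * Real.exp (g - 1)
        ≤ C0 * (((P * B) ^ 3 + 8) * lam) * (1 / r) ^ (p - 1) := by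
      refine (h5.trans hcnt).trans ?_
      gcongr
    have h8 : X / (p : ℝ) ^ (d * n)
        = X / (p : ℝ) ^ (d * n) * Real.exp (g - 1) * (Real.exp 1 * Real.exp (-g)) := by
      rw [mul_assoc, ← Real.exp_add, ← Real.exp_add]
      rw [show g - 1 + (1 + -g) = 0 by ring, Real.exp_zero, mul_one]
    rw [h8]
    calc _ ≤ C0 * (((P * B) ^ 3 + 8) * lam) * (1 / r) ^ (p - 1)
          * (Real.exp 1 * Real.exp (-g)) := by gcongr
      _ = _ := by rw [hGe]; field_simp
  have hA : |p * all / (p : ℝ) ^ (d * n) - G| ≤ 2 * CE * (G * lam) := by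
    rw [hall]
    have h9 := Real.abs_exp_sub_one_le (hEl.trans m4)
    have h10 : G * Real.exp E - G = G * (Real.exp E - 1) := by ring
    rw [h10, abs_mul, abs_of_pos hG0]
    calc _ ≤ G * (2 * (CE * lam)) := by gcongr; linarith
      _ = _ := by ring
  have hB' : |(p : ℝ) ^ n * good / (p : ℝ) ^ (d * n) - p * all / (p : ℝ) ^ (d * n)|
      = X / (p : ℝ) ^ (d * n) := by
    rw [← sub_div, abs_div, abs_of_pos hpd]
  rw [hgd]
  have h11 := abs_sub_le ((p : ℝ) ^ n * good / (p : ℝ) ^ (d * n)) (p * all / (p : ℝ) ^ (d * n)) G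
  rw [hB'] at h11
  have h12 : (2 * CE + C0 * ((P * B) ^ 3 + 8) * Real.exp 1 / κ) * (G * lam)
      = 2 * CE * (G * lam) + C0 * ((P * B) ^ 3 + 8) * Real.exp 1 / κ * (G * lam) := by ring
  rw [h12]
  linarith

lemma goodCount_le (p n d : ℕ) [NeZero p] (m : ZMod p → ℕ) :
    goodCount p n d m ≤ p ^ (d * n) := by
  unfold goodCount
  refine (Finite.card_subtype_le _).trans (le_of_eq ?_)
  simp [Nat.card_eq_fintype_card, ZMod.card, pow_mul]

lemma gaussTerm_le {d p n : ℕ} (hd : 1 ≤ d) (hp : 1 ≤ p) (hn : 1 ≤ n) {Q2 : ℝ} (hQ : 0 ≤ Q2) :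
    gaussTerm d p n Q2 ≤ (p : ℝ) ^ ((3 : ℝ) / 2) * (p : ℝ) ^ (((p : ℝ) - 1) / 2) := by
  have hp1 : (1 : ℝ) ≤ p := by exact_mod_cast hp
  have hd1 : (1 : ℝ) ≤ d := by exact_mod_cast hd
  have hn1 : (1 : ℝ) ≤ n := by exact_mod_cast hn
  have h1 : Real.exp (-((d : ℝ) * p * n / 2) * Q2) ≤ 1 := by
    rw [Real.exp_le_one_iff, neg_mul, neg_nonpos]
    positivity
  have h2 : (p : ℝ) / (2 * Real.pi * d * n) ≤ p := by
    apply div_le_self (by positivity)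
    have h3 := Real.pi_gt_three
    have h4 : 1 ≤ (d : ℝ) * n := one_le_mul_of_one_le_of_one_le hd1 hn1
    nlinarith
  have h5 : 0 ≤ ((p : ℝ) - 1) / 2 := by linarith
  unfold gaussTerm
  calc _ ≤ (p : ℝ) ^ ((3 : ℝ) / 2) * (p : ℝ) ^ (((p : ℝ) - 1) / 2) * 1 := by gcongr
    _ = _ := mul_one _

/-- The local limit theorem for all `n ≥ 2`; the term `n ^ (-K)` takes care of small `n`. -/
lemma final_bound (d p : ℕ) (hd : 3 ≤ d) [NeZero p] (b : ℝ) (hb : 0 < b) (K : ℝ) (hK : 0 < K) :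
    ∃ C : ℝ, 0 < C ∧ ∀ n : ℕ, 2 ≤ n → ∀ ν : ZMod p → ℕ, ∑ j, ν j = n →
      ∑ j, (ν j : ZMod p) * j = 0 →
      ∑ j, ((ν j : ℝ) / n - 1 / p) ^ 2 ≤ b * Real.log n / n →
      |(goodCount p n d fun j => d * ν j : ℝ) / (p : ℝ) ^ ((d - 1) * n)
          - gaussTerm d p n (∑ j, ((ν j : ℝ) / n - 1 / p) ^ 2)|
        ≤ C * (gaussTerm d p n (∑ j, ((ν j : ℝ) / n - 1 / p) ^ 2)
          * Real.log n ^ ((3 : ℝ) / 2) / √(n : ℝ) + (n : ℝ) ^ (-K)) := by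
  have hp1 : 1 ≤ p := NeZero.pos p
  have hp1' : (1 : ℝ) ≤ p := by exact_mod_cast hp1
  obtain ⟨C1, hC1, S, hS, hlarge⟩ := large_bound d p hd b hb
  have hlim : Filter.Tendsto (fun n : ℕ => Real.log n ^ ((3 : ℝ) / 2) / √(n : ℝ))
      Filter.atTop (nhds 0) := by
    have h := (isLittleO_log_rpow_rpow_atTop (3 / 2)
      (show (0 : ℝ) < 1 / 2 by norm_num)).tendsto_div_nhds_zero
    refine (h.comp tendsto_natCast_atTop_atTop).congr fun n => ?_
    simp only [Function.comp, Real.sqrt_eq_rpow]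
  obtain ⟨N0, hN0⟩ := Filter.eventually_atTop.1
    (hlim.eventually (ge_mem_nhds (show (0 : ℝ) < 1 / S by positivity)))
  set M0 : ℝ := (p : ℝ) ^ ((3 : ℝ) / 2) * (p : ℝ) ^ (((p : ℝ) - 1) / 2) with hM0
  have hM00 : 0 ≤ M0 := by positivity
  set C2 : ℝ := ((p : ℝ) ^ (d * N0) + M0) * ((N0 : ℝ) + 1) ^ K with hC2
  have hC20 : 0 ≤ C2 := by positivity
  refine ⟨C1 + C2, by positivity, fun n hn ν hν hmod hdev => ?_⟩
  have hn0 : (0 : ℝ) < n := by exact_mod_cast (by omega : 0 < n)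
  have hn1 : (1 : ℝ) ≤ n := by exact_mod_cast (by omega : 1 ≤ n)
  have hlog : 0 ≤ Real.log n := Real.log_nonneg hn1
  set Q2 := ∑ j, ((ν j : ℝ) / n - 1 / p) ^ 2 with hQ2
  have hQ20 : 0 ≤ Q2 := Finset.sum_nonneg fun _ _ => sq_nonneg _
  have hG0 := gaussTerm_pos (d := d) (n := n) (by omega) hp1 (by omega) Q2
  set G := gaussTerm d p n Q2 with hG
  have hT : 0 ≤ G * Real.log n ^ ((3 : ℝ) / 2) / √(n : ℝ) := by positivity
  have hT' : 0 < (n : ℝ) ^ (-K) := by positivity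
  rcases le_or_gt N0 n with h | h
  · have h1 := hN0 n h
    rw [le_div_iff₀ hS, mul_comm] at h1
    have h2 := hlarge n hn h1 ν hν hmod hdev
    rw [← hQ2, ← hG, ← mul_div_assoc] at h2
    refine h2.trans ?_
    rw [add_mul, mul_add, mul_add]
    have := mul_nonneg hC1.le hT'.le
    have := mul_nonneg hC20 hT
    have := mul_nonneg hC20 hT'.le
    linarith
  · have h1 : (goodCount p n d fun j => d * ν j : ℝ) / (p : ℝ) ^ ((d - 1) * n)
        ≤ (p : ℝ) ^ (d * N0) := by
      have h2 : (goodCount p n d fun j => d * ν j : ℝ) ≤ (p : ℝ) ^ (d * n) := by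
        exact_mod_cast goodCount_le p n d _
      refine (div_le_self (by positivity) (one_le_pow₀ hp1')).trans (h2.trans ?_)
      exact pow_le_pow_right₀ hp1' (Nat.mul_le_mul_left d h.le)
    have h3 : G ≤ M0 := gaussTerm_le (by omega) hp1 (by omega) hQ20
    have h4 : 0 ≤ (goodCount p n d fun j => d * ν j : ℝ) / (p : ℝ) ^ ((d - 1) * n) := by
      positivity
    have h5 : 1 ≤ ((N0 : ℝ) + 1) ^ K * (n : ℝ) ^ (-K) := by
      rw [Real.rpow_neg hn0.le, ← div_eq_mul_inv, one_le_div (by positivity)]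
      have : (n : ℝ) ≤ N0 := by exact_mod_cast h.le
      apply Real.rpow_le_rpow hn0.le (by linarith) hK.le
    have h6 : (p : ℝ) ^ (d * N0) + M0 ≤ C2 * (n : ℝ) ^ (-K) := by
      rw [hC2, mul_assoc]
      exact le_mul_of_one_le_right (by positivity) h5
    have h7 : (0 : ℝ) ≤ (p : ℝ) ^ (d * N0) := by positivity
    refine (abs_le.2 ⟨?_, ?_⟩ : _ ≤ (p : ℝ) ^ (d * N0) + M0).trans (h6.trans ?_)
    · linarith
    · linarith
    · rw [add_mul, mul_add, mul_add]
      have := mul_nonneg hC1.le hT'.le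
      have := mul_nonneg hC20 hT
      have := mul_nonneg hC1.le hT
      linarith

/-- The identification of the index set `{0, …, p - 1}` with `ZMod p`. -/
def finEquivZMod (p : ℕ) [NeZero p] : Fin p ≃ ZMod p where
  toFun j := ((j : ℕ) : ZMod p)
  invFun z := ⟨z.val, ZMod.val_lt z⟩
  left_inv j := Fin.ext (ZMod.val_cast_of_lt j.2)
  right_inv z := ZMod.natCast_zmod_val z

/-- **local central limit theorem estimate.** Let `d ≥ 3`, `p` prime with
`gcd(p,d)=1`. For every `𝔟 > 0` and `K > 0` there is `C > 0` such that for all `n ≥ 2` and all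
equidistributed `p`-tuples `(n_j)` with `∑_j n_j = n` and `∑_j j·n_j ≡ 0 (mod p)`, the
probability `P_n` that a sum of `n` i.i.d. vectors uniform on `{Φ(a) : a ∈ T_{d,p}}` equals
`(d·n_j)_j` satisfies `|P_n - M_n| ≤ C(M_n (ln n)^{3/2}/√n + n^{-K})`. -/
theorem stmt16 (d p : ℕ) (hd : 3 ≤ d) [Fact p.Prime] (hgcd : Nat.gcd p d = 1) :
    ∀ b : ℝ, 0 < b → ∀ K : ℝ, 0 < K → ∃ C : ℝ, 0 < C ∧ ∀ n : ℕ, 2 ≤ n →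
      ∀ ν : Fin p → ℕ, (∑ j, ν j = n) →
        ((∑ j : Fin p, ((j : ℕ) : ZMod p) * ((ν j : ℕ) : ZMod p)) = 0) →
        (∑ j, ((ν j : ℝ) / n - 1 / p) ^ 2 ≤ b * Real.log n / n) →
        |(Nat.card {a : Fin n → Fin d → ZMod p //
              (∀ i, ∑ k, a i k = 0) ∧
                ∀ j : Fin p, ∑ i, phi (a i) ((j : ℕ) : ZMod p) = d * ν j} : ℝ)
              / (p : ℝ) ^ ((d - 1) * n)
            - Mgauss d p n ν|
          ≤ C * (Mgauss d p n ν * (Real.log n) ^ ((3 : ℝ) / 2) / Real.sqrt n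
                  + (n : ℝ) ^ (-K)) := by
  intro b hb K hK
  have : NeZero p := ⟨(Fact.out : p.Prime).ne_zero⟩
  obtain ⟨C, hC, h⟩ := final_bound d p hd b hb K hK
  refine ⟨C, hC, fun n hn ν hν hmod hdev => ?_⟩
  set e := finEquivZMod p with he
  have h1 : ∑ j, ν (e.symm j) = n := by rw [Equiv.sum_comp e.symm ν]; exact hν
  have h2 : ∑ j, (ν (e.symm j) : ZMod p) * j = 0 := by
    rw [← Equiv.sum_comp e, ← hmod]
    refine Finset.sum_congr rfl fun j _ => ?_
    rw [Equiv.symm_apply_apply, mul_comm]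
    rfl
  have h3 : ∑ j, ((ν (e.symm j) : ℝ) / n - 1 / p) ^ 2 = ∑ j, ((ν j : ℝ) / n - 1 / p) ^ 2 :=
    Equiv.sum_comp e.symm fun j => ((ν j : ℝ) / n - 1 / p) ^ 2
  have h4 := h n hn (fun j => ν (e.symm j)) h1 h2 (by rw [h3]; exact hdev)
  rw [h3] at h4
  have h5 : goodCount p n d (fun j => d * ν (e.symm j))
      = Nat.card {a : Fin n → Fin d → ZMod p // (∀ i, ∑ k, a i k = 0) ∧
          ∀ j : Fin p, ∑ i, phi (a i) ((j : ℕ) : ZMod p) = d * ν j} := by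
    unfold goodCount
    refine Nat.card_congr (Equiv.subtypeEquivRight fun a => and_congr_right fun _ => ?_)
    refine ⟨fun h j => ?_, fun h z => ?_⟩
    · have h6 : cnt a (e j) = d * ν (e.symm (e j)) := h (e j)
      rw [Equiv.symm_apply_apply] at h6
      exact h6
    · have h6 : cnt a (e (e.symm z)) = d * ν (e.symm z) := h (e.symm z)
      rw [Equiv.apply_symm_apply] at h6
      exact h6
  rw [h5] at h4
  exact h4
end

section
/- Let d ≥ 3 be an integer and p a prime. For every 𝔟 > 0 there exists C > 0 such that for all n ≥ 2 and all p-tuples (n_0,…,n_{p−1}) of nonnegative integers with Σ_j n_j = n and Σ_{j=0}^{p−1} (n_j/n − 1/p)² ≤ 𝔟 ln n / n, one has | R_n / G_n − 1 | ≤ C (ln n)^{3/2} / n^{1/2}, where R_n = ( n choose n_0,…,n_{p−1} ) · ( dn choose d n_0,…,d n_{p−1} )^{−1} · p^{(d−1)n} and G_n = d^{(p−1)/2} · exp( ((d−1) p n / 2) · Σ_{j=0}^{p−1} (n_j/n − 1/p)² ). -/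
open Filter Topology

/-! ### Stirling's formula with an explicit error -/

/-- The error term in Stirling's formula for `log m!`. -/
noncomputable def stirlingErr (m : ℕ) : ℝ :=
  Real.log (m.factorial : ℝ)
    - (m * Real.log m - m + Real.log m / 2 + Real.log (2 * Real.pi) / 2)

lemma stirlingErr_nonneg {m : ℕ} (hm : m ≠ 0) : 0 ≤ stirlingErr m :=
  sub_nonneg.mpr (Stirling.le_log_factorial_stirling hm)

lemma stirlingErr_eq {m : ℕ} (hm : m ≠ 0) :
    stirlingErr m = Real.log (Stirling.stirlingSeq m) - Real.log (√Real.pi) := by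
  have h0 : (m : ℝ) ≠ 0 := by exact_mod_cast hm
  rw [Stirling.log_stirlingSeq_formula, stirlingErr, Real.log_sqrt Real.pi_pos.le,
    Real.log_mul (by norm_num) h0, Real.log_div h0 (Real.exp_ne_zero 1), Real.log_exp,
    Real.log_mul (by norm_num) Real.pi_pos.ne']
  ring

/-- Robbins' stepwise bound makes `log (stirlingSeq m) - 1 / (12 m)` nondecreasing, so that it
stays below its limit `log √π`. -/
lemma stirlingErr_le {m : ℕ} (hm : m ≠ 0) : stirlingErr m ≤ 1 / (12 * m) := by
  obtain ⟨k, rfl⟩ := Nat.exists_eq_succ_of_ne_zero hm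
  rw [stirlingErr_eq hm]
  set f : ℕ → ℝ := fun i =>
    Real.log (Stirling.stirlingSeq (i + 1)) - 1 / (12 * ((i + 1 : ℕ) : ℝ)) with hf
  have hmono : Monotone f := by
    refine monotone_nat_of_le_succ fun i => ?_
    have h := Stirling.log_stirlingSeq_sdiff_le (i + 1)
    have e : (1 : ℝ) / (12 * ((i + 1 : ℕ) : ℝ) * (((i + 1 : ℕ) : ℝ) + 1))
        = 1 / (12 * ((i + 1 : ℕ) : ℝ)) - 1 / (12 * ((i + 1 + 1 : ℕ) : ℝ)) := by
      push_cast
      field_simp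
      ring
    rw [e] at h
    simp only [hf]
    linarith
  have hlim : Tendsto f atTop (𝓝 (Real.log (√Real.pi) - 0)) := by
    refine Tendsto.sub ?_ ?_
    · exact ((Real.continuousAt_log (by positivity)).tendsto.comp
        Stirling.tendsto_stirlingSeq_sqrt_pi).comp (tendsto_add_atTop_nat 1)
    · have h1 : Tendsto (fun i : ℕ => (1 / 12 : ℝ) * (1 / ((i : ℝ) + 1))) atTop (𝓝 (1 / 12 * 0)) :=
        tendsto_one_div_add_atTop_nhds_zero_nat.const_mul _
      rw [mul_zero] at h1
      refine h1.congr fun i => ?_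
      push_cast
      field_simp
  have := hmono.ge_of_tendsto hlim k
  simp only [hf, Nat.succ_eq_add_one] at this ⊢
  linarith

/-! ### Taylor expansion of the entropy function -/

lemma taylor_bound {x : ℝ} (hx : |x| ≤ 1 / 2) :
    |(1 + x) * Real.log (1 + x) - x - x ^ 2 / 2| ≤ 4 * |x| ^ 3 := by
  have h := Real.abs_log_sub_add_sum_range_le (x := -x) (by rw [abs_neg]; linarith) 2
  simp only [Finset.sum_range_succ, Finset.sum_range_zero, abs_neg, sub_neg_eq_add] at h
  norm_num at h
  have h3 : |x| ^ 3 / (1 - |x|) ≤ 2 * |x| ^ 3 := by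
    rw [div_le_iff₀ (by linarith)]
    nlinarith [pow_nonneg (abs_nonneg x) 3]
  have h4 := h.trans h3
  have e : (1 + x) * Real.log (1 + x) - x - x ^ 2 / 2
      = (1 + x) * (-x + x ^ 2 / 2 + Real.log (1 + x)) - x ^ 3 / 2 := by ring
  have h5 : |1 + x| ≤ 3 / 2 := by
    have := abs_add_le 1 x
    rw [abs_one] at this
    linarith
  rw [e]
  calc _ ≤ |(1 + x) * (-x + x ^ 2 / 2 + Real.log (1 + x))| + |x ^ 3 / 2| := abs_sub _ _
    _ = |1 + x| * |-x + x ^ 2 / 2 + Real.log (1 + x)| + |x| ^ 3 / 2 := by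
      rw [abs_mul, abs_div, abs_pow]; norm_num
    _ ≤ 3 / 2 * (2 * |x| ^ 3) + |x| ^ 3 / 2 := by gcongr
    _ ≤ 4 * |x| ^ 3 := by nlinarith [pow_nonneg (abs_nonneg x) 3]

/-! ### The logarithm of the ratio -/

lemma log_multinomial {p : ℕ} (ν : Fin p → ℕ) :
    Real.log (Nat.multinomial Finset.univ ν : ℝ)
      = Real.log ((∑ j, ν j).factorial : ℝ) - ∑ j, Real.log ((ν j).factorial : ℝ) := by
  have h := Nat.multinomial_spec Finset.univ ν
  have h' : (∏ j, ((ν j).factorial : ℝ)) * (Nat.multinomial Finset.univ ν : ℝ)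
      = ((∑ j, ν j).factorial : ℝ) := by exact_mod_cast h
  have hf : ∀ j ∈ (Finset.univ : Finset (Fin p)), ((ν j).factorial : ℝ) ≠ 0 := fun j _ => by
    exact_mod_cast (ν j).factorial_ne_zero
  have hm : (Nat.multinomial Finset.univ ν : ℝ) ≠ 0 := by
    exact_mod_cast (Nat.multinomial_pos Finset.univ ν).ne'
  rw [← h', Real.log_mul (Finset.prod_ne_zero_iff.mpr hf) hm, Real.log_prod hf]
  ring

/-- Stirling's formula for `(d m)! / m!`: apart from `m log m` and the errors, the right-hand side is
affine in `m`, so most of it cancels when summed over the `ν_j` and compared with `m = n`. -/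
lemma log_factorial_mul_sub {d m : ℕ} (hd : d ≠ 0) (hm : m ≠ 0) :
    Real.log ((d * m).factorial : ℝ) - Real.log (m.factorial : ℝ)
      = ((d : ℝ) - 1) * (m * Real.log m) + m * (d * Real.log d - (d - 1)) + Real.log d / 2
        + (stirlingErr (d * m) - stirlingErr m) := by
  have hd' : (d : ℝ) ≠ 0 := by exact_mod_cast hd
  have hm' : (m : ℝ) ≠ 0 := by exact_mod_cast hm
  simp only [stirlingErr]
  push_cast
  rw [Real.log_mul hd' hm']
  ring

/-- The quotient `R_n / G_n`. -/
noncomputable def ratio (d p n : ℕ) (ν : Fin p → ℕ) : ℝ :=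
  ((Nat.multinomial Finset.univ ν : ℝ)
      / (Nat.multinomial Finset.univ (fun j => d * ν j) : ℝ) * (p : ℝ) ^ ((d - 1) * n))
    / ((d : ℝ) ^ (((p : ℝ) - 1) / 2)
      * Real.exp (((d : ℝ) - 1) * p * n / 2 * ∑ j, ((ν j : ℝ) / n - 1 / p) ^ 2))

lemma ratio_pos {d p n : ℕ} (hd : 0 < d) (hp : 0 < p) (ν : Fin p → ℕ) : 0 < ratio d p n ν := by
  have h1 : (0 : ℝ) < Nat.multinomial Finset.univ ν := by
    exact_mod_cast Nat.multinomial_pos Finset.univ ν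
  have h2 : (0 : ℝ) < Nat.multinomial Finset.univ (fun j => d * ν j) := by
    exact_mod_cast Nat.multinomial_pos Finset.univ _
  have h3 : (0 : ℝ) < d := by exact_mod_cast hd
  have h4 : (0 : ℝ) < p := by exact_mod_cast hp
  unfold ratio
  positivity

/-- The exact formula for `log (R_n / G_n)`: a Taylor remainder plus Stirling errors. -/
lemma log_ratio_eq {d p n : ℕ} (hd : 0 < d) (hp : 0 < p) (hn : 0 < n) (ν : Fin p → ℕ)
    (hν : ∀ j, ν j ≠ 0) (hs : ∑ j, ν j = n) (x : Fin p → ℝ)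
    (hx : ∀ j, x j = p * ν j / n - 1) :
    Real.log (ratio d p n ν)
      = ((d : ℝ) - 1) * (n / p) * ∑ j, ((1 + x j) * Real.log (1 + x j) - x j - x j ^ 2 / 2)
        + (∑ j, (stirlingErr (d * ν j) - stirlingErr (ν j))
          - (stirlingErr (d * n) - stirlingErr n)) := by
  have h1 : (0 : ℝ) < Nat.multinomial Finset.univ ν := by
    exact_mod_cast Nat.multinomial_pos Finset.univ ν
  have h2 : (0 : ℝ) < Nat.multinomial Finset.univ (fun j => d * ν j) := by
    exact_mod_cast Nat.multinomial_pos Finset.univ _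
  have hd' : (0 : ℝ) < d := by exact_mod_cast hd
  have hp' : (0 : ℝ) < p := by exact_mod_cast hp
  have hn' : (0 : ℝ) < n := by exact_mod_cast hn
  have hsR : ∑ j, (ν j : ℝ) = n := by exact_mod_cast hs
  have hd1 : ((d - 1 : ℕ) : ℝ) = (d : ℝ) - 1 := by
    rw [Nat.cast_sub hd]; simp
  have hlog : Real.log (ratio d p n ν)
      = (∑ j, (Real.log ((d * ν j).factorial : ℝ) - Real.log ((ν j).factorial : ℝ)))
        - (Real.log ((d * n).factorial : ℝ) - Real.log (n.factorial : ℝ))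
        + ((d : ℝ) - 1) * n * Real.log p
        - (((p : ℝ) - 1) / 2 * Real.log d
          + ((d : ℝ) - 1) * p * n / 2 * ∑ j, ((ν j : ℝ) / n - 1 / p) ^ 2) := by
    unfold ratio
    rw [Real.log_div (by positivity) (by positivity), Real.log_mul (by positivity) (by positivity),
      Real.log_div h1.ne' h2.ne', Real.log_mul (by positivity) (by positivity), Real.log_exp,
      Real.log_pow, Real.log_rpow hd', log_multinomial, log_multinomial, ← Finset.mul_sum, hs,
      Finset.sum_sub_distrib]
    push_cast
    rw [hd1]
    ring
  have hstir : ∑ j, (Real.log ((d * ν j).factorial : ℝ) - Real.log ((ν j).factorial : ℝ))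
      = ((d : ℝ) - 1) * ∑ j, (ν j : ℝ) * Real.log (ν j)
        + n * (d * Real.log d - (d - 1)) + p * (Real.log d / 2)
        + ∑ j, (stirlingErr (d * ν j) - stirlingErr (ν j)) := by
    rw [Finset.sum_congr rfl fun j _ => log_factorial_mul_sub hd.ne' (hν j)]
    rw [Finset.sum_add_distrib, Finset.sum_add_distrib, Finset.sum_add_distrib, ← Finset.mul_sum,
      ← Finset.sum_mul, hsR]
    simp
  -- The entropy terms and `log p` combine to `∑ ν_j log (p ν_j / n)`.
  have hterm : ∀ j, (n / p : ℝ) * ((1 + x j) * Real.log (1 + x j) - x j - x j ^ 2 / 2)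
      = ν j * Real.log (ν j) + ν j * (Real.log p - Real.log n) - (ν j - n / p)
        - p * n / 2 * ((ν j : ℝ) / n - 1 / p) ^ 2 := by
    intro j
    have hj : (ν j : ℝ) ≠ 0 := by exact_mod_cast hν j
    have e : 1 + x j = p * ν j / n := by rw [hx]; ring
    rw [e, Real.log_div (by positivity) hn'.ne', Real.log_mul hp'.ne' hj, hx]
    field_simp
    ring
  have hmain : (n / p : ℝ) * ∑ j, ((1 + x j) * Real.log (1 + x j) - x j - x j ^ 2 / 2)
      = ∑ j, (ν j : ℝ) * Real.log (ν j) + n * (Real.log p - Real.log n)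
        - p * n / 2 * ∑ j, ((ν j : ℝ) / n - 1 / p) ^ 2 := by
    rw [Finset.mul_sum, Finset.sum_congr rfl fun j _ => hterm j, Finset.sum_sub_distrib,
      Finset.sum_sub_distrib, Finset.sum_add_distrib, ← Finset.sum_mul, ← Finset.mul_sum,
      Finset.sum_sub_distrib, hsR]
    simp only [Finset.sum_const, Finset.card_univ, Fintype.card_fin, nsmul_eq_mul]
    rw [mul_div_cancel₀ _ hp'.ne']
    ring
  rw [hlog, hstir, log_factorial_mul_sub hd.ne' hn.ne',
    mul_assoc ((d : ℝ) - 1) ((n : ℝ) / p), hmain]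
  ring

/-- If all `ν_j` are within a factor `1 ± 1/2` of `n/p`, then `log (R_n / G_n)` is bounded by the
cubic Taylor remainder plus `O(1/n)`. -/
lemma abs_log_ratio_le {d p n : ℕ} (hd : 0 < d) (hp : 0 < p) (hn : 0 < n) (ν : Fin p → ℕ)
    (hs : ∑ j, ν j = n) {r : ℝ} (hr : r ≤ 1 / 2) (hx : ∀ j, |(p : ℝ) * ν j / n - 1| ≤ r) :
    |Real.log (ratio d p n ν)| ≤ 4 * (d * (n * r ^ 3)) + (p + 1) * (p / n) := by
  have hd' : (1 : ℝ) ≤ d := by exact_mod_cast hd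
  have hp' : (1 : ℝ) ≤ p := by exact_mod_cast hp
  have hn' : (0 : ℝ) < n := by exact_mod_cast hn
  have hlow : ∀ j, (n : ℝ) / (2 * p) ≤ ν j := by
    intro j
    have h1 := (abs_le.mp ((hx j).trans hr)).1
    have h2 : (1 / 2 : ℝ) ≤ p * ν j / n := by linarith
    rw [le_div_iff₀ hn'] at h2
    rw [div_le_iff₀ (by positivity)]
    linarith
  have hν : ∀ j, ν j ≠ 0 := by
    intro j h0
    have := hlow j
    rw [h0] at this
    have h2 : (0 : ℝ) < n / (2 * p) := by positivity
    norm_num at this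
    linarith
  -- `E (d m)` and `E m` both lie in `[0, 1/(12 m)]`.
  have herr : ∀ m : ℕ, (n : ℝ) / (2 * p) ≤ m →
      |stirlingErr (d * m) - stirlingErr m| ≤ p / n := by
    intro m hm
    have hmpos : (0 : ℝ) < m := lt_of_lt_of_le (by positivity) hm
    have hm0 : m ≠ 0 := by rintro rfl; simp at hmpos
    have hdm0 : d * m ≠ 0 := mul_ne_zero hd.ne' hm0
    have a1 := stirlingErr_nonneg hm0
    have a2 := stirlingErr_le hm0
    have a3 := stirlingErr_nonneg hdm0
    have a4 := stirlingErr_le hdm0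
    have hb : (1 : ℝ) / (12 * m) ≤ p / n := by
      rw [div_le_iff₀ (by positivity)] at hm
      rw [div_le_div_iff₀ (by positivity) hn']
      nlinarith
    have hc : (1 : ℝ) / (12 * ((d * m : ℕ) : ℝ)) ≤ 1 / (12 * m) := by
      apply one_div_le_one_div_of_le (by positivity)
      push_cast
      nlinarith
    rw [abs_le]
    constructor <;> linarith
  rw [log_ratio_eq hd hp hn ν hν hs (fun j => p * ν j / n - 1) (fun j => rfl)]
  have hT : |∑ j, ((1 + ((p : ℝ) * ν j / n - 1)) * Real.log (1 + ((p : ℝ) * ν j / n - 1))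
      - ((p : ℝ) * ν j / n - 1) - ((p : ℝ) * ν j / n - 1) ^ 2 / 2)| ≤ p * (4 * r ^ 3) := by
    refine (Finset.abs_sum_le_sum_abs _ _).trans ?_
    refine (Finset.sum_le_card_nsmul _ _ (4 * r ^ 3) fun j _ => ?_).trans (by simp)
    refine (taylor_bound ((hx j).trans hr)).trans ?_
    have := hx j
    gcongr
  have hE : |∑ j, (stirlingErr (d * ν j) - stirlingErr (ν j))| ≤ p * (p / n) := by
    refine (Finset.abs_sum_le_sum_abs _ _).trans ?_
    exact (Finset.sum_le_card_nsmul _ _ (p / n : ℝ) fun j _ => herr _ (hlow j)).trans (by simp)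
  have hEn := herr n (div_le_self hn'.le (by linarith))
  have hr0 : 0 ≤ r := (abs_nonneg _).trans (hx ⟨0, hp⟩)
  have hM : |((d : ℝ) - 1) * (n / p) * ∑ j, ((1 + ((p : ℝ) * ν j / n - 1))
      * Real.log (1 + ((p : ℝ) * ν j / n - 1))
      - ((p : ℝ) * ν j / n - 1) - ((p : ℝ) * ν j / n - 1) ^ 2 / 2)| ≤ 4 * (d * (n * r ^ 3)) := by
    have h0 : (0 : ℝ) ≤ ((d : ℝ) - 1) * (n / p) :=
      mul_nonneg (by linarith) (by positivity)
    rw [abs_mul, abs_of_nonneg h0]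
    refine (mul_le_mul_of_nonneg_left hT h0).trans ?_
    have e : ((d : ℝ) - 1) * (n / p) * (p * (4 * r ^ 3)) = 4 * ((d - 1) * (n * r ^ 3)) := by
      field_simp
    rw [e]
    gcongr
    linarith
  refine (abs_add_le _ _).trans ?_
  have := abs_sub (∑ j, (stirlingErr (d * ν j) - stirlingErr (ν j)))
    (stirlingErr (d * n) - stirlingErr n)
  linarith

/-! ### Asymptotics for large `n` -/

lemma tendsto_rate :
    Tendsto (fun n : ℕ => Real.log n ^ ((3 : ℝ) / 2) / √(n : ℝ)) atTop (𝓝 0) := by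
  have h := (isLittleO_log_rpow_rpow_atTop (3 / 2) (show (0 : ℝ) < 1 / 2 by norm_num)
    ).tendsto_div_nhds_zero
  simp only [← Real.sqrt_eq_rpow] at h
  exact h.comp tendsto_natCast_atTop_atTop

lemma tendsto_log_div :
    Tendsto (fun n : ℕ => Real.log n / (n : ℝ)) atTop (𝓝 0) :=
  (Real.isLittleO_log_id_atTop.tendsto_div_nhds_zero).comp tendsto_natCast_atTop_atTop

/-- The estimate for all sufficiently large `n`. -/
lemma eventually_bound {d p : ℕ} (hd : 0 < d) (hp : 0 < p) {b : ℝ} (hb : 0 < b) :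
    ∃ C : ℝ, ∃ N : ℕ, ∀ n : ℕ, N ≤ n → ∀ ν : Fin p → ℕ, ∑ j, ν j = n →
      (∑ j, ((ν j : ℝ) / n - 1 / p) ^ 2 ≤ b * Real.log n / n) →
      |ratio d p n ν - 1| ≤ C * (Real.log n ^ ((3 : ℝ) / 2) / √(n : ℝ)) := by
  have hp' : (0 : ℝ) < p := by exact_mod_cast hp
  set K : ℝ := 4 * (d * (p * √b) ^ 3) + (p + 1) * p with hK
  have ev1 : ∀ᶠ n : ℕ in atTop, K * (Real.log n ^ ((3 : ℝ) / 2) / √(n : ℝ)) < 1 := by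
    have := tendsto_rate.const_mul K
    rw [mul_zero] at this
    exact this.eventually_lt_const one_pos
  have ev2 : ∀ᶠ n : ℕ in atTop, (p ^ 2 * b) * (Real.log n / (n : ℝ)) < 1 / 4 := by
    have := tendsto_log_div.const_mul (p ^ 2 * b)
    rw [mul_zero] at this
    exact this.eventually_lt_const (by norm_num)
  have ev3 : ∀ᶠ n : ℕ in atTop, 1 ≤ Real.log n :=
    (Real.tendsto_log_atTop.comp tendsto_natCast_atTop_atTop).eventually_ge_atTop 1
  obtain ⟨N, hN⟩ := eventually_atTop.mp
    (ev1.and (ev2.and (ev3.and (eventually_gt_atTop 0))))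
  refine ⟨2 * K, N, fun n hn ν hs hν => ?_⟩
  obtain ⟨h1, h2, h3, hn0⟩ := hN n hn
  have hn' : (1 : ℝ) ≤ n := by exact_mod_cast hn0
  have hl0 : 0 ≤ Real.log n := by linarith
  set t : ℝ := Real.log n ^ ((3 : ℝ) / 2) / √(n : ℝ) with ht
  set r : ℝ := p * √b * (√(Real.log n) / √(n : ℝ)) with hr
  have hr0 : 0 ≤ r := by positivity
  have hrsq : r ^ 2 = p ^ 2 * b * (Real.log n / n) := by
    rw [hr, mul_pow, mul_pow, div_pow, Real.sq_sqrt hb.le, Real.sq_sqrt hl0,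
      Real.sq_sqrt (by linarith)]
  have hrhalf : r ≤ 1 / 2 := by
    refine le_of_lt (lt_of_pow_lt_pow_left₀ 2 (by norm_num) ?_)
    rw [hrsq]
    linarith
  have hx : ∀ j, |(p : ℝ) * ν j / n - 1| ≤ r := by
    intro j
    refine abs_le_of_sq_le_sq ?_ hr0
    have hj : ((ν j : ℝ) / n - 1 / p) ^ 2 ≤ b * Real.log n / n :=
      (Finset.single_le_sum (f := fun j => ((ν j : ℝ) / n - 1 / p) ^ 2)
        (fun i _ => sq_nonneg _) (Finset.mem_univ j)).trans hν
    have e : (p : ℝ) * ν j / n - 1 = p * ((ν j : ℝ) / n - 1 / p) := by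
      field_simp
    rw [e, mul_pow, hrsq]
    calc (p : ℝ) ^ 2 * ((ν j : ℝ) / n - 1 / p) ^ 2 ≤ p ^ 2 * (b * Real.log n / n) := by gcongr
      _ = _ := by ring
  have hlog32 : Real.log n ^ ((3 : ℝ) / 2) = √(Real.log n) ^ 3 := by
    rw [Real.sqrt_eq_rpow, ← Real.rpow_natCast, ← Real.rpow_mul hl0]
    norm_num
  have hnr : (n : ℝ) * r ^ 3 = (p * √b) ^ 3 * t := by
    have hsn : (n : ℝ) = √(n : ℝ) ^ 2 := (Real.sq_sqrt (by linarith)).symm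
    have hs0 : √(n : ℝ) ≠ 0 := by positivity
    rw [hr, ht, hlog32, mul_pow, div_pow]
    nth_rewrite 1 [hsn]
    field_simp
  have hnt : (1 : ℝ) / n ≤ t := by
    have hA : (1 : ℝ) ≤ Real.log n ^ ((3 : ℝ) / 2) := Real.one_le_rpow h3 (by norm_num)
    have hB : √(n : ℝ) ≤ n := Real.sqrt_le_iff.mpr ⟨by linarith, by nlinarith⟩
    rw [ht]
    gcongr
  have hkey : |Real.log (ratio d p n ν)| ≤ K * t := by
    refine (abs_log_ratio_le hd hp hn0 ν hs hrhalf hx).trans ?_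
    rw [hnr, hK]
    have : ((p : ℝ) + 1) * (p / n) ≤ (p + 1) * p * t := by
      rw [show ((p : ℝ) + 1) * (p / n) = (p + 1) * p * (1 / n) by ring]
      gcongr
    linarith
  have hfin := Real.abs_exp_sub_one_le (hkey.trans h1.le)
  rw [Real.exp_log (ratio_pos hd hp ν)] at hfin
  linarith

/-! ### The uniform bound -/

/-- **Stirling estimate for the multinomial ratio.** Let `d ≥ 3`, `p` prime.
For every `𝔟 > 0` there is `C > 0` such that for all `n ≥ 2` and all equidistributed
`p`-tuples `(n_j)` with `∑_j n_j = n`, the ratio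
`R_n = (n choose n_0,…,n_{p-1}) (dn choose dn_0,…,dn_{p-1})⁻¹ p^{(d-1)n}` satisfies
`|R_n/G_n - 1| ≤ C (ln n)^{3/2}/√n`, where
`G_n = d^{(p-1)/2} exp(((d-1)pn/2) Σ_j (n_j/n - 1/p)²)`. -/
theorem stmt17 (d p : ℕ) (hd : 3 ≤ d) [Fact p.Prime] :
    ∀ b : ℝ, 0 < b → ∃ C : ℝ, 0 < C ∧ ∀ n : ℕ, 2 ≤ n →
      ∀ ν : Fin p → ℕ, (∑ j, ν j = n) →
        (∑ j, ((ν j : ℝ) / n - 1 / p) ^ 2 ≤ b * Real.log n / n) →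
        |((Nat.multinomial Finset.univ ν : ℝ)
              / (Nat.multinomial Finset.univ (fun j => d * ν j) : ℝ)
              * (p : ℝ) ^ ((d - 1) * n))
            / ((d : ℝ) ^ (((p : ℝ) - 1) / 2)
                * Real.exp (((d : ℝ) - 1) * p * n / 2
                    * ∑ j, ((ν j : ℝ) / n - 1 / p) ^ 2))
          - 1|
        ≤ C * (Real.log n) ^ ((3 : ℝ) / 2) / Real.sqrt n := by
  intro b hb
  have hd0 : 0 < d := by omega
  have hp0 : 0 < p := (Fact.out : p.Prime).pos
  obtain ⟨C₁, N, hC₁⟩ := eventually_bound hd0 hp0 hb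
  -- Only finitely many tuples have `∑ ν_j < N`; `M` bounds the needed constant on all of them.
  obtain ⟨M, hM⟩ := ((Set.finite_Iic (fun _ : Fin p => N)).image fun ν =>
    |ratio d p (∑ j, ν j) ν - 1|
      / (Real.log ((∑ j, ν j : ℕ) : ℝ) ^ ((3 : ℝ) / 2) / √((∑ j, ν j : ℕ) : ℝ))).bddAbove
  refine ⟨max 1 (max C₁ M), lt_of_lt_of_le one_pos (le_max_left _ _), fun n hn ν hs hν => ?_⟩
  have hn1 : (1 : ℝ) < n := by exact_mod_cast (by omega : 1 < n)
  have ht : 0 < Real.log n ^ ((3 : ℝ) / 2) / √(n : ℝ) := by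
    have := Real.log_pos hn1
    positivity
  change |ratio d p n ν - 1| ≤ _
  rw [mul_div_assoc]
  rcases le_or_gt N n with h | h
  · refine (hC₁ n h ν hs hν).trans (mul_le_mul_of_nonneg_right ?_ ht.le)
    exact (le_max_left _ _).trans (le_max_right _ _)
  · have hmem : ν ∈ Set.Iic (fun _ : Fin p => N) := fun j => by
      have := Finset.single_le_sum (f := ν) (fun i _ => Nat.zero_le _) (Finset.mem_univ j)
      show ν j ≤ N
      omega
    have := hM (Set.mem_image_of_mem _ hmem)
    simp only [hs] at this
    rw [div_le_iff₀ ht] at this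
    refine this.trans (mul_le_mul_of_nonneg_right ?_ ht.le)
    exact (le_max_right _ _).trans (le_max_right _ _)
end
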